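/- arXiv:1504.04396 — 5 statements merged into one kernel-verified Lean document; each statement's English description precedes it below -/
import Mathlib

section
/- The regularized I-function I^{reg} is infinitely differentiable on (0, R) and satisfies, for all τ ∈ (0, R), the regularized Picard–Fuchs equation τ^r · [∏_{j=1}^N ∏_{l=0}^{c_j−1} (−(c_j/r)·θ − l − a^j)] I^{reg}(τ) = [∏_{l=0}^{d−1}((d/r)·θ − dλ − l)] ∘ [∏_{l=0}^{r−1}(θ − l)] I^{reg}(τ), where θ is the Euler operator θf(τ) = τ·f′(τ) and the products denote compositions of the indicated first-order operators (which pairwise commute, being polynomials in θ). -/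
/-- The Euler operator `θ f (τ) = τ · f′(τ)` on real-valued functions of a real variable. -/
noncomputable def eulerOpR (f : ℝ → ℝ) : ℝ → ℝ := fun τ => τ * deriv f τ

/-- The composition, over a list of pairs `(α, β)`, of the commuting first-order operators
`α·θ + β` (the head of the list acting outermost). -/
noncomputable def opProdR (L : List (ℝ × ℝ)) (f : ℝ → ℝ) : ℝ → ℝ :=
  L.foldr (fun p g τ => p.1 * eulerOpR g τ + p.2 * g τ) f

namespace PF

def Good (R : ℝ) (s : ℕ → ℝ) (B : ℕ → ℝ) : Prop :=
  ∀ ρ ∈ Set.Ioo (0 : ℝ) R, Summable fun k => |B k| * ρ ^ (s k)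

noncomputable def F (s : ℕ → ℝ) (B : ℕ → ℝ) (τ : ℝ) : ℝ := ∑' k, B k * τ ^ (s k)

lemma x_pow_le {ρ ρ' x : ℝ} (h0 : 0 < ρ) (h1 : ρ < ρ') :
    x * ρ ^ x ≤ (1 / Real.log (ρ' / ρ)) * ρ' ^ x := by
  have hρ' : 0 < ρ' := h0.trans h1
  have hL : 0 < Real.log (ρ' / ρ) := Real.log_pos (by rwa [lt_div_iff₀ h0, one_mul])
  have h2 : ρ' ^ x = ρ ^ x * (ρ' / ρ) ^ x := by
    rw [← Real.mul_rpow h0.le (by positivity)]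
    congr 1; field_simp
  have h3 : Real.log (ρ' / ρ) * x ≤ (ρ' / ρ) ^ x := by
    rw [Real.rpow_def_of_pos (by positivity)]
    linarith [Real.add_one_le_exp (Real.log (ρ' / ρ) * x)]
  have h4 : x ≤ (1 / Real.log (ρ' / ρ)) * (ρ' / ρ) ^ x := by
    rw [div_mul_eq_mul_div, one_mul, le_div_iff₀ hL]; linarith
  rw [h2]
  have h5 : 0 < ρ ^ x := Real.rpow_pos_of_pos h0 _
  nlinarith

lemma Good.mul_s {R : ℝ} {s B : ℕ → ℝ} (hs : ∀ k, 0 ≤ s k) (h : Good R s B) :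
    Good R s (fun k => B k * s k) := by
  intro ρ hρ
  obtain ⟨ρ', h1, h2⟩ := exists_between hρ.2
  have hS := (h ρ' ⟨hρ.1.trans h1, h2⟩).mul_left (1 / Real.log (ρ' / ρ))
  refine Summable.of_nonneg_of_le (fun k => ?_) (fun k => ?_) hS
  · have := Real.rpow_pos_of_pos hρ.1 (s k)
    positivity
  · rw [abs_mul, abs_of_nonneg (hs k)]
    have := mul_le_mul_of_nonneg_left (x_pow_le (x := s k) hρ.1 h1) (abs_nonneg (B k))
    linarith

lemma Good.lin {R : ℝ} {s B : ℕ → ℝ} (hs : ∀ k, 0 ≤ s k) (h : Good R s B) (α β : ℝ) :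
    Good R s (fun k => B k * (α * s k + β)) := by
  intro ρ hρ
  have h1 := ((h.mul_s hs ρ hρ).mul_left |α|).add ((h ρ hρ).mul_left |β|)
  refine Summable.of_nonneg_of_le (fun k => ?_) (fun k => ?_) h1
  · have := Real.rpow_pos_of_pos hρ.1 (s k)
    positivity
  · have h2 := Real.rpow_pos_of_pos hρ.1 (s k)
    have h3 : |B k * (α * s k + β)| ≤ |α| * |B k * s k| + |β| * |B k| := by
      have : B k * (α * s k + β) = α * (B k * s k) + β * B k := by ring
      rw [this, ← abs_mul, ← abs_mul]
      exact abs_add_le _ _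
    nlinarith [mul_le_mul_of_nonneg_right h3 h2.le]

lemma Good.summable {R : ℝ} {s B : ℕ → ℝ} (h : Good R s B) {τ : ℝ} (hτ : τ ∈ Set.Ioo (0 : ℝ) R) :
    Summable fun k => B k * τ ^ (s k) := by
  refine Summable.of_norm ?_
  refine (h τ hτ).congr fun k => ?_
  rw [Real.norm_eq_abs, abs_mul, abs_of_pos (Real.rpow_pos_of_pos hτ.1 (s k))]

lemma Good.hasDerivAt {R : ℝ} {s B : ℕ → ℝ} (hs : ∀ k, 0 ≤ s k) (h : Good R s B)
    {τ : ℝ} (hτ : τ ∈ Set.Ioo (0 : ℝ) R) :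
    HasDerivAt (F s B) (F s (fun k => B k * s k) τ / τ) τ := by
  obtain ⟨x, hx0, hx⟩ := exists_between hτ.1
  obtain ⟨y, hy, hyR⟩ := exists_between hτ.2
  have hu := (h.mul_s hs y ⟨hτ.1.trans hy, hyR⟩).mul_left (1 / x)
  have key := hasDerivAt_tsum_of_isPreconnected (t := Set.Ioo x y)
    (g := fun k τ => B k * τ ^ (s k)) (g' := fun k τ => B k * s k * τ ^ (s k) / τ)
    hu isOpen_Ioo isPreconnected_Ioo (y₀ := τ) (y := τ) ?_ ?_ ⟨hx, hy⟩ (h.summable hτ) ⟨hx, hy⟩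
  · have : F s (fun k => B k * s k) τ / τ = ∑' k, B k * s k * τ ^ (s k) / τ := by
      rw [F, tsum_div_const]
    rw [this]
    exact key
  · intro k z hz
    have hz0 : 0 < z := hx0.trans hz.1
    have := (Real.hasDerivAt_rpow_const (x := z) (p := s k) (Or.inl hz0.ne')).const_mul (B k)
    have e : B k * s k * z ^ (s k) / z = B k * (s k * z ^ (s k - 1)) := by
      rw [Real.rpow_sub_one hz0.ne']
      ring
    show HasDerivAt _ (B k * s k * z ^ (s k) / z) z
    rw [e]
    exact this
  · intro k z hz
    have hz0 : 0 < z := hx0.trans hz.1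
    have h1 : z ^ s k ≤ y ^ s k := Real.rpow_le_rpow hz0.le hz.2.le (hs k)
    have h2 : 1 / z ≤ 1 / x := one_div_le_one_div_of_le hx0 hz.1.le
    have h3 := Real.rpow_pos_of_pos hz0 (s k)
    rw [Real.norm_eq_abs, abs_div, abs_mul, abs_of_pos h3, abs_of_pos hz0, div_eq_inv_mul, ← one_div]
    gcongr

lemma Good.contDiffOn {R : ℝ} {s : ℕ → ℝ} (hs : ∀ k, 0 ≤ s k) (n : ℕ) :
    ∀ {B : ℕ → ℝ}, Good R s B → ContDiffOn ℝ n (F s B) (Set.Ioo 0 R) := by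
  induction n with
  | zero =>
    intro B h
    rw [Nat.cast_zero, contDiffOn_zero]
    exact fun τ hτ => (h.hasDerivAt hs hτ).continuousAt.continuousWithinAt
  | succ n ih =>
    intro B h
    rw [Nat.cast_succ, contDiffOn_succ_iff_deriv_of_isOpen isOpen_Ioo]
    refine ⟨fun τ hτ => (h.hasDerivAt hs hτ).differentiableAt.differentiableWithinAt, by simp, ?_⟩
    have h1 : ContDiffOn ℝ n (fun τ => F s (fun k => B k * s k) τ / τ) (Set.Ioo 0 R) :=
      (ih (h.mul_s hs)).div contDiffOn_id (fun τ hτ => hτ.1.ne')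
    exact h1.congr fun τ hτ => (h.hasDerivAt hs hτ).deriv

lemma opProd_eq {R : ℝ} {s : ℕ → ℝ} (hs : ∀ k, 0 ≤ s k) {B : ℕ → ℝ} (hB : Good R s B)
    {f : ℝ → ℝ} (hf : ∀ τ ∈ Set.Ioo (0 : ℝ) R, f τ = F s B τ) (L : List (ℝ × ℝ)) :
    Good R s (fun k => B k * (L.map fun p => p.1 * s k + p.2).prod) ∧
    ∀ τ ∈ Set.Ioo (0 : ℝ) R,
      opProdR L f τ = F s (fun k => B k * (L.map fun p => p.1 * s k + p.2).prod) τ := by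
  induction L with
  | nil =>
    have e : (fun k => B k * (([] : List (ℝ × ℝ)).map fun p => p.1 * s k + p.2).prod) = B := by
      funext k; simp
    rw [e]
    exact ⟨hB, hf⟩
  | cons p L ih =>
    obtain ⟨ihG, ihF⟩ := ih
    have e : (fun k => B k * ((p :: L).map fun p => p.1 * s k + p.2).prod) =
        fun k => (B k * (L.map fun p => p.1 * s k + p.2).prod) * (p.1 * s k + p.2) := by
      funext k; simp; ring
    rw [e]
    refine ⟨ihG.lin hs _ _, fun τ hτ => ?_⟩
    have h1 : opProdR (p :: L) f τ = p.1 * eulerOpR (opProdR L f) τ + p.2 * opProdR L f τ := rfl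
    have h2 : opProdR L f =ᶠ[nhds τ] F s (fun k => B k * (L.map fun p => p.1 * s k + p.2).prod) := by
      filter_upwards [isOpen_Ioo.mem_nhds hτ] with z hz using ihF z hz
    rw [h1, eulerOpR, h2.deriv_eq, (ihG.hasDerivAt hs hτ).deriv, ihF τ hτ,
      mul_div_cancel₀ _ hτ.1.ne']
    rw [F, F, F, ← tsum_mul_left, ← tsum_mul_left, ← Summable.tsum_add]
    · congr 1; funext k; ring
    · exact ((ihG.mul_s hs).summable hτ).mul_left _
    · exact (ihG.summable hτ).mul_left _

lemma summable_of_shift {f : ℕ → ℝ} (hf : ∀ k, 0 ≤ f k) {d : ℕ} (hd : 0 < d) {t : ℝ}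
    (ht0 : 0 < t) (ht1 : t < 1) (K : ℕ) (h : ∀ k, K ≤ k → f (k + d) ≤ t * f k) : Summable f := by
  set q := t ^ ((1 : ℝ) / d) with hq
  have hq0 : 0 < q := Real.rpow_pos_of_pos ht0 _
  have hq1 : q < 1 := Real.rpow_lt_one ht0.le ht1 (by positivity)
  have hqd : q ^ d = t := by
    rw [hq, ← Real.rpow_natCast, ← Real.rpow_mul ht0.le]
    rw [one_div, inv_mul_cancel₀ (by positivity), Real.rpow_one]
  set C := ∑ i ∈ Finset.range (K + d), f i / q ^ i with hC
  have hb : ∀ k, f k ≤ C * q ^ k := by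
    intro k
    induction k using Nat.strong_induction_on with
    | _ k ih =>
      by_cases hk : k < K + d
      · rw [← div_le_iff₀ (by positivity)]
        exact Finset.single_le_sum (f := fun i => f i / q ^ i)
          (fun i _ => div_nonneg (hf i) (by positivity)) (Finset.mem_range.2 hk)
      · push Not at hk
        obtain ⟨m, rfl⟩ : ∃ m, k = m + d := ⟨k - d, by omega⟩
        have h1 := h m (by omega)
        have h2 := ih m (by omega)
        rw [pow_add, hqd]
        nlinarith
  exact Summable.of_nonneg_of_le hf hb ((summable_geometric_of_lt_one hq0.le hq1).mul_left C)

lemma gamma_desc (c : ℕ) (x : ℝ) (h : ∀ l < c, x - 1 - l ≠ 0) :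
    Real.Gamma x = Real.Gamma (x - c) * ∏ l ∈ Finset.range c, (x - 1 - l) := by
  induction c with
  | zero => simp
  | succ n ih =>
    rw [ih (fun l hl => h l (by omega)), Finset.prod_range_succ]
    have := Real.Gamma_add_one (h n (by omega))
    have e : x - 1 - n + 1 = x - n := by ring
    rw [e] at this
    rw [this]
    have e2 : x - ((n + 1 : ℕ) : ℝ) = x - 1 - n := by push_cast; ring
    rw [e2]; ring

lemma nonint {lam : ℝ} (hirr : Irrational lam) {c d : ℕ} (hc : 0 < c) (k : ℕ) (a : ℚ) (n : ℤ) :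
    1 - (c : ℝ) * lam - (k : ℝ) * ((c : ℝ) / (d : ℝ)) - (a : ℝ) ≠ n := by
  intro h
  apply hirr
  refine ⟨(1 - k * (c / d) - a - n) / c, ?_⟩
  push_cast
  have : (c : ℝ) ≠ 0 := by positivity
  rw [div_eq_iff this, ← h]; ring

lemma tendsto_lin (α β : ℝ) :
    Filter.Tendsto (fun k : ℕ => (α * k + β) / (k : ℝ)) Filter.atTop (nhds α) := by
  have h : Filter.Tendsto (fun k : ℕ => α + β / (k : ℝ)) Filter.atTop (nhds (α + 0)) :=
    tendsto_const_nhds.add (tendsto_const_div_atTop_nhds_zero_nat β)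
  rw [add_zero] at h
  refine h.congr' ?_
  filter_upwards [Filter.eventually_gt_atTop 0] with k hk
  field_simp

lemma list_range_prod (f : ℕ → ℝ) (n : ℕ) :
    ((List.range n).map f).prod = ∏ l ∈ Finset.range n, f l := rfl

lemma ecast (n : ℕ) : (do let a ← List.range n; pure (a : ℝ) : List ℝ) =
    (List.range n).map (fun l : ℕ => (l : ℝ)) := by
  simp [← List.map_eq_flatMap]

end PF

/-- Setup as in Statement 9.  The regularized `I`-function
`I^{reg}(τ) = Σ_{k₀} A_{k₀} τ^{r(k₀/d+λ)}` is infinitely differentiable on `(0, R)` and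
satisfies the regularized Picard–Fuchs equation
`τ^r·[∏_j ∏_{l<c_j}(−(c_j/r)θ − l − a^j)] I^{reg}
  = [∏_{l<d}((d/r)θ − dλ − l)]∘[∏_{l<r}(θ − l)] I^{reg}` there. -/
theorem stmt_10 (N : ℕ) (hN : 1 ≤ N) (c : Fin N → ℕ) (d r : ℕ)
    (hc : ∀ j, 0 < c j) (hd : 0 < d) (hdvd : ∀ j, c j ∣ d)
    (hr : 0 < r) (hrsum : (∑ j, c j) = d + r)
    (a : Fin N → ℚ) (ha : ∀ j, 0 ≤ a j)
    (lam : ℝ) (hpos : 0 < lam) (hirr : Irrational lam)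
    (A : ℕ → ℝ)
    (hA : ∀ k₀ : ℕ, A k₀ =
      (1 / (Real.Gamma (1 + (r : ℝ) * ((k₀ : ℝ) / (d : ℝ) + lam)) * (k₀.factorial : ℝ))) *
        ∏ j, Real.Gamma (1 - (c j : ℝ) * lam -
              Int.fract ((k₀ : ℝ) * ((c j : ℝ) / (d : ℝ)) + (a j : ℝ))) /
          Real.Gamma (1 - (c j : ℝ) * lam - (k₀ : ℝ) * ((c j : ℝ) / (d : ℝ)) - (a j : ℝ)))
    (R : ℝ)
    (hR : R = ((r : ℝ) ^ (r : ℝ) * (d : ℝ) ^ (d : ℝ) *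
      ∏ j, (c j : ℝ) ^ (-(c j : ℝ))) ^ ((1 : ℝ) / (r : ℝ)))
    (Ireg : ℝ → ℝ)
    (hI : ∀ τ ∈ Set.Ioo (0 : ℝ) R,
      Ireg τ = ∑' k₀ : ℕ, A k₀ * τ ^ ((r : ℝ) * ((k₀ : ℝ) / (d : ℝ) + lam))) :
    ContDiffOn ℝ (⊤ : ℕ∞) Ireg (Set.Ioo 0 R) ∧
    ∀ τ ∈ Set.Ioo (0 : ℝ) R,
      τ ^ (r : ℕ) *
        opProdR (((List.finRange N).map (fun j => (List.range (c j)).map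
            (fun l => (-(c j : ℝ) / (r : ℝ), -(l : ℝ) - (a j : ℝ))))).flatten) Ireg τ =
      opProdR ((List.range d).map (fun l => ((d : ℝ) / (r : ℝ), -(d : ℝ) * lam - (l : ℝ))))
        (opProdR ((List.range r).map (fun l => ((1 : ℝ), -(l : ℝ)))) Ireg) τ := by
  classical
  have hrR : (0 : ℝ) < r := by exact_mod_cast hr
  have hdR : (0 : ℝ) < d := by exact_mod_cast hd
  have hcR : ∀ j, (0 : ℝ) < c j := fun j => by exact_mod_cast hc j
  set s : ℕ → ℝ := fun k => (r : ℝ) * ((k : ℝ) / (d : ℝ) + lam) with hs_def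
  have hs : ∀ k, 0 ≤ s k := fun k => by simp only [hs_def]; positivity
  have hs0 : ∀ k, 0 < s k := fun k => by simp only [hs_def]; positivity
  have hsd : ∀ k, s (k + d) = s k + r := by
    intro k; simp only [hs_def]; push_cast; field_simp; ring
  set P : ℕ → ℝ := fun k => ∏ j, ∏ l ∈ Finset.range (c j),
    (-(c j : ℝ) / (r : ℝ) * s k + (-(l : ℝ) - (a j : ℝ))) with hP
  set Q1 : ℕ → ℝ := fun k => ∏ l ∈ Finset.range d,
    ((d : ℝ) / (r : ℝ) * s k + (-(d : ℝ) * lam - (l : ℝ))) with hQ1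
  set Q2 : ℕ → ℝ := fun k => ∏ l ∈ Finset.range r, ((1 : ℝ) * s k + -(l : ℝ)) with hQ2
  set D : Fin N → ℕ → ℝ := fun j k =>
    Real.Gamma (1 - (c j : ℝ) * lam - (k : ℝ) * ((c j : ℝ) / (d : ℝ)) - (a j : ℝ)) with hD
  set G : Fin N → ℕ → ℝ := fun j k => Real.Gamma (1 - (c j : ℝ) * lam -
              Int.fract ((k : ℝ) * ((c j : ℝ) / (d : ℝ)) + (a j : ℝ))) with hG
  have hA' : ∀ k, A k = (1 / (Real.Gamma (1 + s k) * (k.factorial : ℝ))) * ∏ j, G j k / D j k := hA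
  have hGd : ∀ j k, G j (k + d) = G j k := by
    intro j k
    simp only [hG]
    have e : ((k + d : ℕ) : ℝ) * ((c j : ℝ) / (d : ℝ)) + (a j : ℝ) =
        ((k : ℝ) * ((c j : ℝ) / (d : ℝ)) + (a j : ℝ)) + ((c j : ℕ) : ℝ) := by
      push_cast; field_simp; ring
    rw [e, Int.fract_add_natCast]
  have hpne : ∀ (j : Fin N) (k l : ℕ), (-(c j : ℝ) / (r : ℝ) * s k + (-(l : ℝ) - (a j : ℝ))) ≠ 0 ∧
      (-(c j : ℝ) / (r : ℝ) * s k + (-(l : ℝ) - (a j : ℝ))) =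
      1 - (c j : ℝ) * lam - (k : ℝ) * ((c j : ℝ) / (d : ℝ)) - (a j : ℝ) - 1 - (l : ℝ) := by
    intro j k l
    have e : (-(c j : ℝ) / (r : ℝ) * s k + (-(l : ℝ) - (a j : ℝ))) =
      1 - (c j : ℝ) * lam - (k : ℝ) * ((c j : ℝ) / (d : ℝ)) - (a j : ℝ) - 1 - (l : ℝ) := by
      simp only [hs_def]; field_simp; ring
    refine ⟨?_, e⟩
    rw [e]
    intro h
    refine PF.nonint hirr (hc j) k (a j) (d := d) (1 + l) ?_
    push_cast; linarith
  have hDrec : ∀ j k, D j k = D j (k + d) * ∏ l ∈ Finset.range (c j),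
      (-(c j : ℝ) / (r : ℝ) * s k + (-(l : ℝ) - (a j : ℝ))) := by
    intro j k
    simp only [hD]
    rw [PF.gamma_desc (c j)]
    · congr 1
      · congr 1; push_cast; field_simp; ring
      · exact Finset.prod_congr rfl fun l _ => ((hpne j k l).2).symm
    · intro l _
      rw [← (hpne j k l).2]; exact (hpne j k l).1
  have hprodne : ∀ j k, ∏ l ∈ Finset.range (c j),
      (-(c j : ℝ) / (r : ℝ) * s k + (-(l : ℝ) - (a j : ℝ))) ≠ 0 := fun j k =>
    Finset.prod_ne_zero_iff.2 fun l _ => (hpne j k l).1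
  have hq1 : ∀ k l : ℕ, (d : ℝ) / (r : ℝ) * s k + (-(d : ℝ) * lam - (l : ℝ)) = k - l := by
    intro k l; simp only [hs_def]; field_simp; ring
  have hQ1ne : ∀ k, Q1 (k + d) ≠ 0 := by
    intro k
    refine Finset.prod_ne_zero_iff.2 fun l hl => ?_
    rw [hq1]
    have : (l : ℝ) < d := by exact_mod_cast Finset.mem_range.1 hl
    push_cast
    have : (0 : ℝ) ≤ k := by positivity
    intro h; linarith
  have hQ2ne : ∀ k, Q2 (k + d) ≠ 0 := by
    intro k
    refine Finset.prod_ne_zero_iff.2 fun l hl => ?_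
    rw [hsd]
    have : (l : ℝ) < r := by exact_mod_cast Finset.mem_range.1 hl
    have := hs0 k
    intro h; linarith
  have hQ1z : ∀ k < d, Q1 k = 0 := by
    intro k hk
    refine Finset.prod_eq_zero (Finset.mem_range.2 hk) ?_
    rw [hq1, sub_self]
  have hfact : ∀ k, ((k + d).factorial : ℝ) = k.factorial * Q1 (k + d) := by
    intro k
    rw [← Real.Gamma_nat_eq_factorial, ← Real.Gamma_nat_eq_factorial, PF.gamma_desc d]
    · congr 1
      · congr 1; push_cast; ring
      · refine Finset.prod_congr rfl fun l _ => ?_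
        rw [hq1]; ring
    · intro l hl
      have : (l : ℝ) < d := by exact_mod_cast hl
      push_cast
      have : (0 : ℝ) ≤ k := by positivity
      intro h; linarith
  have hgam : ∀ k, Real.Gamma (1 + s (k + d)) = Real.Gamma (1 + s k) * Q2 (k + d) := by
    intro k
    rw [PF.gamma_desc r (1 + s (k + d))]
    · congr 1
      · congr 1; rw [hsd]; ring
      · refine Finset.prod_congr rfl fun l _ => ?_
        ring
    · intro l hl
      have : (l : ℝ) < r := by exact_mod_cast hl
      have := hs0 k
      rw [hsd]
      intro h; linarith
  have hrec : ∀ k, A (k + d) * Q2 (k + d) * Q1 (k + d) = A k * P k := by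
    intro k
    have e : (∏ j, G j k / D j k) * P k = ∏ j, G j (k + d) / D j (k + d) := by
      rw [hP, ← Finset.prod_mul_distrib]
      refine Finset.prod_congr rfl fun j _ => ?_
      rw [hGd, hDrec j k, div_mul_eq_mul_div, mul_div_mul_right _ _ (hprodne j k)]
    rw [hA' k, mul_assoc (1 / _), e, hA' (k + d), hfact, hgam]
    have h1 := hQ1ne k
    have h2 := hQ2ne k
    have h3 : Real.Gamma (1 + s k) ≠ 0 := (Real.Gamma_pos_of_pos (by linarith [hs0 k])).ne'
    have h4 : (k.factorial : ℝ) ≠ 0 := by positivity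
    generalize (∏ j, G j (k + d) / D j (k + d)) = X
    field_simp
  -- limits
  have hlin : ∀ α β : ℝ, Filter.Tendsto (fun k : ℕ => (α * s k + β) / (k : ℝ)) Filter.atTop
      (nhds (α * (r / d))) := by
    intro α β
    refine (PF.tendsto_lin (α * (r / d)) (α * (r * lam) + β)).congr fun k => ?_
    simp only [hs_def]; congr 1; ring
  have hlin' : ∀ α β : ℝ, Filter.Tendsto (fun k : ℕ => (α * s (k + d) + β) / (k : ℝ)) Filter.atTop
      (nhds (α * (r / d))) := by
    intro α β
    refine (hlin α (α * r + β)).congr fun k => ?_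
    rw [hsd]; congr 1; ring
  have hPlim : Filter.Tendsto (fun k : ℕ => P k / (k : ℝ) ^ (d + r)) Filter.atTop
      (nhds (∏ j, ∏ l ∈ Finset.range (c j), (-(c j : ℝ) / r * (r / d)))) := by
    have := tendsto_finsetProd Finset.univ (fun (j : Fin N) _ =>
      tendsto_finsetProd (Finset.range (c j)) (fun l _ =>
        hlin (-(c j : ℝ) / r) (-(l : ℝ) - (a j : ℝ))))
    refine this.congr fun k => ?_
    simp only [Finset.prod_div_distrib, Finset.prod_const, Finset.card_range,
      Finset.prod_pow_eq_pow_sum, hrsum, hP]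
  have hQlim : Filter.Tendsto (fun k : ℕ => (Q2 (k + d) * Q1 (k + d)) / (k : ℝ) ^ (d + r))
      Filter.atTop (nhds ((∏ l ∈ Finset.range r, ((1 : ℝ) * (r / d))) *
        ∏ l ∈ Finset.range d, ((d : ℝ) / r * (r / d)))) := by
    have := (tendsto_finsetProd (Finset.range r) (fun l _ => hlin' 1 (-(l : ℝ)))).mul
      (tendsto_finsetProd (Finset.range d) (fun l _ =>
        hlin' ((d : ℝ) / r) (-(d : ℝ) * lam - (l : ℝ))))
    refine this.congr fun k => ?_
    simp only [Finset.prod_div_distrib, Finset.prod_const, Finset.card_range, hQ1, hQ2]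
    rw [div_mul_div_comm, ← pow_add, add_comm r d]
  have hcprod : (0 : ℝ) < ∏ j, (c j : ℝ) ^ (c j) :=
    Finset.prod_pos fun j _ => pow_pos (hcR j) _
  have hRr : R ^ r = (r : ℝ) ^ r * (d : ℝ) ^ d / ∏ j, (c j : ℝ) ^ (c j) := by
    have e : (r : ℝ) ^ (r : ℝ) * (d : ℝ) ^ (d : ℝ) * ∏ j, (c j : ℝ) ^ (-(c j : ℝ)) =
        (r : ℝ) ^ r * (d : ℝ) ^ d / ∏ j, (c j : ℝ) ^ (c j) := by
      rw [Real.rpow_natCast, Real.rpow_natCast, div_eq_mul_inv, ← Finset.prod_inv_distrib]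
      congr 1
      refine Finset.prod_congr rfl fun j _ => ?_
      rw [Real.rpow_neg (hcR j).le, Real.rpow_natCast]
    rw [hR, e, ← Real.rpow_natCast, ← Real.rpow_mul (by positivity), one_div,
      inv_mul_cancel₀ hrR.ne', Real.rpow_one]
  have hlim : Filter.Tendsto (fun k : ℕ => |P k| / |Q2 (k + d) * Q1 (k + d)|) Filter.atTop
      (nhds (1 / R ^ r)) := by
    have hne : ((∏ l ∈ Finset.range r, ((1 : ℝ) * (r / d))) *
        ∏ l ∈ Finset.range d, ((d : ℝ) / r * (r / d))) ≠ 0 := by positivity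
    have h := (hPlim.div hQlim hne).abs
    have e : |(∏ j, ∏ l ∈ Finset.range (c j), (-(c j : ℝ) / r * (r / d))) /
        ((∏ l ∈ Finset.range r, ((1 : ℝ) * (r / d))) *
        ∏ l ∈ Finset.range d, ((d : ℝ) / r * (r / d)))| = 1 / R ^ r := by
      have e1 : (d : ℝ) / r * (r / d) = 1 := by field_simp
      have e2 : ∀ j, |-(c j : ℝ) / r * (r / d)| = c j / d := by
        intro j
        rw [show -(c j : ℝ) / r * (r / d) = -((c j : ℝ) / d) by field_simp, abs_neg,
          abs_of_pos (div_pos (hcR j) hdR)]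
      simp only [Finset.prod_const, Finset.card_range, e1, one_pow, mul_one, one_mul, abs_div,
        Finset.abs_prod, abs_pow, e2, div_pow, Finset.prod_div_distrib,
        Finset.prod_pow_eq_pow_sum, hrsum, Nat.abs_cast, hRr]
      field_simp
      ring
    rw [e] at h
    refine h.congr' ?_
    filter_upwards [Filter.eventually_gt_atTop 0] with k hk
    have hk' : (k : ℝ) ^ (d + r) ≠ 0 := by positivity
    simp only [Pi.div_apply]
    rw [div_div_div_cancel_right₀ hk', abs_div]
  have hgood : PF.Good R s A := by
    intro ρ hρ
    have hR0 : 0 < R := hρ.1.trans hρ.2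
    have hlt : 1 / R ^ r * ρ ^ r < 1 := by
      rw [one_div_mul_eq_div, div_lt_one (by positivity)]
      exact pow_lt_pow_left₀ hρ.2 hρ.1.le hr.ne'
    have hpos0 : 0 < 1 / R ^ r * ρ ^ r := by have := hρ.1; positivity
    obtain ⟨t, ht1, ht2⟩ := exists_between hlt
    have hev := (hlim.mul_const (ρ ^ r)).eventually (gt_mem_nhds ht1)
    obtain ⟨K, hK⟩ := Filter.eventually_atTop.1 hev
    have hρp : ∀ k, 0 < ρ ^ s k := fun k => Real.rpow_pos_of_pos hρ.1 _
    refine PF.summable_of_shift (fun k => mul_nonneg (abs_nonneg _) (hρp k).le) hd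
      (hpos0.trans ht1) ht2 K fun k hk => ?_
    have h1 := hK k hk
    have hQne : Q2 (k + d) * Q1 (k + d) ≠ 0 := mul_ne_zero (hQ2ne k) (hQ1ne k)
    have h2 : |A (k + d)| = |A k| * (|P k| / |Q2 (k + d) * Q1 (k + d)|) := by
      rw [← mul_div_assoc, eq_div_iff (abs_ne_zero.2 hQne), ← abs_mul, ← abs_mul, ← mul_assoc, hrec]
    rw [h2, hsd, Real.rpow_add hρ.1, Real.rpow_natCast]
    have h3 := mul_le_mul_of_nonneg_left h1.le (mul_nonneg (abs_nonneg (A k)) (hρp k).le)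
    linarith
  have hIF : ∀ τ ∈ Set.Ioo (0 : ℝ) R, Ireg τ = PF.F s A τ := hI
  constructor
  · refine ContDiffOn.congr ?_ hIF
    rw [contDiffOn_infty]
    exact fun n => hgood.contDiffOn hs n
  · intro τ hτ
    obtain ⟨gL, fL⟩ := PF.opProd_eq hs hgood hIF
      (((List.finRange N).map (fun j => (List.range (c j)).map
            (fun l => (-(c j : ℝ) / (r : ℝ), -(l : ℝ) - (a j : ℝ))))).flatten)
    obtain ⟨g2, f2⟩ := PF.opProd_eq hs hgood hIF
      ((List.range r).map (fun l => ((1 : ℝ), -(l : ℝ))))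
    obtain ⟨g1, f1⟩ := PF.opProd_eq hs g2 f2
      ((List.range d).map (fun l => ((d : ℝ) / (r : ℝ), -(d : ℝ) * lam - (l : ℝ))))
    rw [fL τ hτ, f1 τ hτ]
    have eP : (fun k => A k * ((((List.finRange N).map (fun j => (List.range (c j)).map
            (fun l => (-(c j : ℝ) / (r : ℝ), -(l : ℝ) - (a j : ℝ))))).flatten).map
            fun p => p.1 * s k + p.2).prod) = fun k => A k * P k := by
      funext k
      congr 1
      rw [List.map_flatten, List.prod_flatten, List.map_map, List.map_map, hP]
      simp only [Fin.prod_univ_def]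
      congr 1
      refine List.map_congr_left fun j _ => ?_
      simp only [Function.comp, PF.ecast, List.map_map]
      exact PF.list_range_prod _ _
    have eQ : (fun k => A k * (((List.range r).map (fun l => ((1 : ℝ), -(l : ℝ)))).map
            fun p => p.1 * s k + p.2).prod *
          (((List.range d).map (fun l => ((d : ℝ) / (r : ℝ), -(d : ℝ) * lam - (l : ℝ)))).map
            fun p => p.1 * s k + p.2).prod) = fun k => A k * Q2 k * Q1 k := by
      funext k
      rw [PF.ecast, PF.ecast, List.map_map, List.map_map, List.map_map, List.map_map]
      rfl
    rw [eQ] at g1 ⊢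
    rw [eP]
    have hsum := g1.summable hτ
    rw [PF.F, PF.F, ← hsum.sum_add_tsum_nat_add d, Finset.sum_eq_zero, zero_add, ← tsum_mul_left]
    · refine tsum_congr fun k => ?_
      rw [hrec, hsd, Real.rpow_add hτ.1, Real.rpow_natCast]; ring
    · intro k hk
      rw [hQ1z k (Finset.mem_range.1 hk)]; simp
end

section
/- Set n = c₁+⋯+c_N. Let g : (0,∞) → C be n-times continuously differentiable such that: (i) g satisfies the regularized Picard–Fuchs equation τ^r · [∏_{j=1}^N ∏_{l=0}^{c_j−1}(−(c_j/r)·θ − l − a^j)] g(τ) = [∏_{l=0}^{d−1}((d/r)·θ − dλ − l)] ∘ [∏_{l=0}^{r−1}(θ − l)] g(τ) for all τ > 0; (ii) g^{(j)}(τ) → 0 as τ → 0⁺ for every 0 ≤ j ≤ n; (iii) there exist constants C, p with |g^{(j)}(τ)| ≤ C(1+τ)^p for all τ > 0 and 0 ≤ j ≤ n. Then F(u) := u·∫₀^∞ e^{−uτ} g(τ) dτ is well defined and infinitely differentiable on (0,∞), and satisfies [∏_{j=1}^N ∏_{l=0}^{c_j−1}((c_j/r)·θ_u − l − a^j)] F(u)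 = u^r · [∏_{l=0}^{d−1}(−(d/r)·θ_u − dλ − l)] F(u) for all u > 0, where θ (resp. θ_u) is the Euler operator τ·d/dτ (resp. u·d/du). -/
open MeasureTheory

/-- The Euler operator `θ f (τ) = τ · f′(τ)` acting on complex-valued functions of a real
variable. -/
noncomputable def eulerOpC (f : ℝ → ℂ) : ℝ → ℂ := fun τ => (τ : ℂ) * deriv f τ

/-- The composition, over a list of pairs `(α, β)`, of the commuting first-order operators
`α·θ + β` (the head of the list acting outermost). -/
noncomputable def opProdC (L : List (ℂ × ℂ)) (f : ℝ → ℂ) : ℝ → ℂ :=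
  L.foldr (fun p g τ => p.1 * eulerOpC g τ + p.2 * g τ) f

section Helpers

open Set Filter Topology

/-- base regularity class -/
def W0 (h : ℝ → ℂ) : Prop :=
  ContinuousOn h (Ioi 0) ∧ Tendsto h (𝓝[>] 0) (𝓝 0) ∧
    ∀ b : ℝ, 0 < b → ∃ C : ℝ, ∀ τ : ℝ, 0 < τ → ‖h τ‖ ≤ C * Real.exp (b * τ)

/-- regularity class with `k` derivatives -/
def WW : ℕ → (ℝ → ℂ) → Prop
  | 0, h => W0 h
  | k + 1, h => W0 h ∧ DifferentiableOn ℝ h (Ioi 0) ∧ WW k (deriv h)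

lemma W0.add {f h : ℝ → ℂ} (hf : W0 f) (hh : W0 h) : W0 (fun t => f t + h t) := by
  refine ⟨hf.1.add hh.1, by simpa using hf.2.1.add hh.2.1, fun b hb => ?_⟩
  obtain ⟨C, hC⟩ := hf.2.2 b hb
  obtain ⟨D, hD⟩ := hh.2.2 b hb
  refine ⟨C + D, fun τ hτ => (norm_add_le _ _).trans ?_⟩
  rw [add_mul]
  exact add_le_add (hC τ hτ) (hD τ hτ)

lemma W0.smul {f : ℝ → ℂ} (c : ℂ) (hf : W0 f) : W0 (fun t => c * f t) := by
  refine ⟨continuousOn_const.mul hf.1, by simpa using hf.2.1.const_mul c, fun b hb => ?_⟩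
  obtain ⟨C, hC⟩ := hf.2.2 b hb
  refine ⟨‖c‖ * C, fun τ hτ => ?_⟩
  rw [norm_mul, mul_assoc]
  exact mul_le_mul_of_nonneg_left (hC τ hτ) (norm_nonneg _)

lemma W0.tmul {f : ℝ → ℂ} (hf : W0 f) : W0 (fun t => (t : ℂ) * f t) := by
  refine ⟨Complex.continuous_ofReal.continuousOn.mul hf.1, ?_, fun b hb => ?_⟩
  · have h1 : Tendsto (fun t : ℝ => (t : ℂ)) (𝓝[>] 0) (𝓝 ((0 : ℝ) : ℂ)) :=
      (Complex.continuous_ofReal.tendsto 0).mono_left nhdsWithin_le_nhds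
    simpa using h1.mul hf.2.1
  · obtain ⟨C, hC⟩ := hf.2.2 (b / 2) (by positivity)
    refine ⟨(2 / b) * C, fun τ hτ => ?_⟩
    rw [norm_mul, Complex.norm_real, Real.norm_of_nonneg hτ.le]
    have h1 : τ ≤ (2 / b) * Real.exp (b / 2 * τ) := by
      have := Real.add_one_le_exp (b / 2 * τ)
      have h2 : τ = (2 / b) * (b / 2 * τ) := by field_simp
      calc τ = (2 / b) * (b / 2 * τ) := h2
        _ ≤ _ := by gcongr; linarith
    calc τ * ‖f τ‖ ≤ ((2 / b) * Real.exp (b / 2 * τ)) * (C * Real.exp (b / 2 * τ)) :=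
          mul_le_mul h1 (hC τ hτ) (norm_nonneg _) (by positivity)
      _ = (2 / b) * C * (Real.exp (b / 2 * τ) * Real.exp (b / 2 * τ)) := by ring
      _ = _ := by rw [← Real.exp_add]; congr 2; ring

lemma W0.congr {f h : ℝ → ℂ} (hf : W0 f) (e : EqOn h f (Ioi 0)) : W0 h := by
  refine ⟨hf.1.congr e, hf.2.1.congr' ?_, fun b hb => ?_⟩
  · filter_upwards [self_mem_nhdsWithin] with t ht using (e ht).symm
  · obtain ⟨C, hC⟩ := hf.2.2 b hb
    exact ⟨C, fun τ hτ => by rw [e hτ]; exact hC τ hτ⟩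

lemma WW.w0 {k : ℕ} {f : ℝ → ℂ} (hf : WW k f) : W0 f := by
  cases k with
  | zero => exact hf
  | succ k => exact hf.1

lemma WW.pred {k : ℕ} : ∀ {f : ℝ → ℂ}, WW (k + 1) f → WW k f := by
  induction k with
  | zero => intro f hf; exact hf.1
  | succ k ih => intro f hf; exact ⟨hf.1, hf.2.1, ih hf.2.2⟩

lemma WW.mono {k m : ℕ} (hkm : k ≤ m) {f : ℝ → ℂ} (hf : WW m f) : WW k f := by
  induction hkm with
  | refl => exact hf
  | step _ ih => exact ih hf.pred

lemma WW.congr {k : ℕ} : ∀ {f h : ℝ → ℂ}, WW k f → EqOn h f (Ioi 0) → WW k h := by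
  induction k with
  | zero => intro f h hf e; exact W0.congr hf e
  | succ k ih =>
    intro f h hf e
    exact ⟨hf.1.congr e, hf.2.1.congr e, ih hf.2.2 (e.deriv isOpen_Ioi)⟩

lemma diffAt {f : ℝ → ℂ} (hf : DifferentiableOn ℝ f (Ioi 0)) {t : ℝ} (ht : 0 < t) :
    DifferentiableAt ℝ f t := hf.differentiableAt (Ioi_mem_nhds ht)

lemma ofReal_hasDerivAt (t : ℝ) : HasDerivAt (fun t : ℝ => (t : ℂ)) 1 t := by
  simpa using (hasDerivAt_id t).ofReal_comp

lemma WW.add {k : ℕ} : ∀ {f h : ℝ → ℂ}, WW k f → WW k h → WW k (fun t => f t + h t) := by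
  induction k with
  | zero => intro f h hf hh; exact W0.add hf hh
  | succ k ih =>
    intro f h hf hh
    refine ⟨hf.1.add hh.1, hf.2.1.add hh.2.1, (ih hf.2.2 hh.2.2).congr fun t ht => ?_⟩
    exact ((diffAt hf.2.1 ht).hasDerivAt.add (diffAt hh.2.1 ht).hasDerivAt).deriv

lemma WW.smul {k : ℕ} (c : ℂ) : ∀ {f : ℝ → ℂ}, WW k f → WW k (fun t => c * f t) := by
  induction k with
  | zero => intro f hf; exact W0.smul c hf
  | succ k ih =>
    intro f hf
    refine ⟨hf.1.smul c, hf.2.1.const_mul c, (ih hf.2.2).congr fun t ht => ?_⟩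
    exact ((diffAt hf.2.1 ht).hasDerivAt.const_mul c).deriv

lemma deriv_tmul {f : ℝ → ℂ} (hf : DifferentiableOn ℝ f (Ioi 0)) {t : ℝ} (ht : 0 < t) :
    deriv (fun t : ℝ => (t : ℂ) * f t) t = f t + t * deriv f t := by
  have := ((ofReal_hasDerivAt t).mul (diffAt hf ht).hasDerivAt).deriv
  rw [one_mul] at this
  exact this

lemma WW.tmul {k : ℕ} : ∀ {f : ℝ → ℂ}, WW k f → WW k (fun t => (t : ℂ) * f t) := by
  induction k with
  | zero => intro f hf; exact W0.tmul hf
  | succ k ih =>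
    intro f hf
    refine ⟨hf.1.tmul, fun t ht => ?_, (hf.pred.add (ih hf.2.2)).congr fun t ht =>
      deriv_tmul hf.2.1 ht⟩
    exact ((ofReal_hasDerivAt t).differentiableAt.mul (diffAt hf.2.1 ht)).differentiableWithinAt

lemma WW.euler {k : ℕ} {f : ℝ → ℂ} (hf : WW (k + 1) f) : WW k (eulerOpC f) := hf.2.2.tmul

lemma WW.iter {k m : ℕ} : ∀ {f : ℝ → ℂ}, WW (m + k) f → WW m (deriv^[k] f) := by
  induction k with
  | zero => intro f hf; exact hf
  | succ k ih => intro f hf; exact ih (f := deriv f) hf.2.2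

lemma opProdC_cons (p : ℂ × ℂ) (L : List (ℂ × ℂ)) (f : ℝ → ℂ) :
    opProdC (p :: L) f = fun τ => p.1 * eulerOpC (opProdC L f) τ + p.2 * opProdC L f τ := rfl

lemma opProdC_append (L M : List (ℂ × ℂ)) (f : ℝ → ℂ) :
    opProdC (L ++ M) f = opProdC L (opProdC M f) := by
  simp [opProdC, List.foldr_append]

lemma WW.op {L : List (ℂ × ℂ)} : ∀ {k : ℕ} {f : ℝ → ℂ}, WW (k + L.length) f →
    WW k (opProdC L f) := by
  induction L with
  | nil => intro k f hf; exact hf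
  | cons p L ih =>
    intro k f hf
    have h1 : WW (k + 1) (opProdC L f) := ih (by
      rw [List.length_cons] at hf
      convert hf using 1; omega)
    exact (h1.euler.smul _).add (h1.pred.smul _)

lemma euler_congr {f h : ℝ → ℂ} (e : EqOn f h (Ioi 0)) :
    EqOn (eulerOpC f) (eulerOpC h) (Ioi 0) := fun t ht => by
  simp only [eulerOpC]; rw [e.deriv isOpen_Ioi ht]

lemma op_congr {L : List (ℂ × ℂ)} {f h : ℝ → ℂ} (e : EqOn f h (Ioi 0)) :
    EqOn (opProdC L f) (opProdC L h) (Ioi 0) := by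
  induction L with
  | nil => exact e
  | cons p L ih =>
    intro t ht
    simp only [opProdC_cons]
    rw [euler_congr ih ht, ih ht]

lemma iter_congr {k : ℕ} : ∀ {f h : ℝ → ℂ}, EqOn f h (Ioi 0) →
    EqOn (deriv^[k] f) (deriv^[k] h) (Ioi 0) := by
  induction k with
  | zero => intro f h e; exact e
  | succ k ih => intro f h e; exact ih (f := deriv f) (h := deriv h) (e.deriv isOpen_Ioi)

lemma iter_lin {k : ℕ} (a b : ℂ) : ∀ {f h : ℝ → ℂ}, WW k f → WW k h →
    EqOn (deriv^[k] (fun t => a * f t + b * h t))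
      (fun t => a * deriv^[k] f t + b * deriv^[k] h t) (Ioi 0) := by
  induction k with
  | zero => intro f h _ _ t _; rfl
  | succ k ih =>
    intro f h hf hh t ht
    have e : EqOn (deriv (fun t => a * f t + b * h t))
        (fun t => a * deriv f t + b * deriv h t) (Ioi 0) := fun t ht =>
      (((diffAt hf.2.1 ht).hasDerivAt.const_mul a).add
        ((diffAt hh.2.1 ht).hasDerivAt.const_mul b)).deriv
    have h1 := iter_congr (k := k) e ht
    simp only [Function.iterate_succ_apply]
    rw [h1]
    exact ih hf.2.2 hh.2.2 ht

lemma iter_euler {k : ℕ} : ∀ {f : ℝ → ℂ}, WW (k + 1) f →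
    EqOn (deriv^[k] (eulerOpC f))
      (fun t => eulerOpC (deriv^[k] f) t + k * deriv^[k] f t) (Ioi 0) := by
  induction k with
  | zero => intro f _ t _; simp
  | succ k ih =>
    intro f hf t ht
    have e : EqOn (deriv (eulerOpC f))
        (fun t => 1 * eulerOpC (deriv f) t + 1 * deriv f t) (Ioi 0) := fun t ht => by
      have := deriv_tmul hf.2.2.2.1 ht
      have h5 : deriv (eulerOpC f) t = _ := this
      rw [h5]; simp only [eulerOpC]; ring
    have h1 := iter_congr (k := k) e ht
    simp only [Function.iterate_succ_apply]
    rw [h1, iter_lin 1 1 hf.2.2.euler hf.2.2.pred ht]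
    have h2 := ih hf.2.2 ht
    simp only at h2 ⊢
    rw [h2]; push_cast; ring

lemma iter_op {k : ℕ} {L : List (ℂ × ℂ)} : ∀ {f : ℝ → ℂ}, WW (k + L.length) f →
    EqOn (deriv^[k] (opProdC L f))
      (opProdC (L.map fun p => (p.1, p.2 + k * p.1)) (deriv^[k] f)) (Ioi 0) := by
  induction L with
  | nil => intro f _ t _; rfl
  | cons p L ih =>
    intro f hf t ht
    have hf' : WW (k + 1 + L.length) f := by
      rw [List.length_cons] at hf
      convert hf using 1; omega
    have h1 : WW (k + 1) (opProdC L f) := hf'.op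
    have h2 := ih (hf'.mono (by omega))
    rw [opProdC_cons, iter_lin _ _ h1.euler h1.pred ht, List.map_cons, opProdC_cons]
    have h3 := iter_euler h1 ht
    simp only at h3 ⊢
    rw [h3, euler_congr h2 ht, h2 ht]
    ring

lemma pow_euler {r : ℕ} {f : ℝ → ℂ} (hf : DifferentiableOn ℝ f (Ioi 0)) :
    EqOn (eulerOpC fun t => (t : ℂ) ^ r * f t)
      (fun t => (t : ℂ) ^ r * (eulerOpC f t + r * f t)) (Ioi 0) := by
  intro t ht
  have := (((ofReal_hasDerivAt t).pow r).mul (diffAt hf ht).hasDerivAt).deriv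
  simp only [eulerOpC]
  have h2 : deriv (fun t : ℝ => (t : ℂ) ^ r * f t) t
    = (r : ℂ) * (t : ℂ) ^ (r - 1) * 1 * f t + (t : ℂ) ^ r * deriv f t := by
    exact this
  rw [h2]
  cases r with
  | zero => simp
  | succ r => simp only [Nat.add_sub_cancel]; ring

lemma op_pow {r : ℕ} {L : List (ℂ × ℂ)} : ∀ {f : ℝ → ℂ}, WW L.length f →
    EqOn (opProdC L fun t => (t : ℂ) ^ r * f t)
      (fun t => (t : ℂ) ^ r * opProdC (L.map fun p => (p.1, p.2 + r * p.1)) f t) (Ioi 0) := by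
  induction L with
  | nil => intro f _ t _; rfl
  | cons p L ih =>
    intro f hf t ht
    have h2 := ih hf.pred
    have h1 : WW 1 (opProdC (L.map fun p => (p.1, p.2 + r * p.1)) f) :=
      WW.op (hf.mono (by simp; omega))
    simp only [opProdC_cons, List.map_cons]
    rw [euler_congr h2 ht, pow_euler h1.2.1 ht, h2 ht]
    ring

lemma op_falling {r : ℕ} : ∀ {f : ℝ → ℂ}, WW r f →
    EqOn (opProdC ((List.range r).map (fun l : ℕ => ((1 : ℂ), -(l : ℂ)))) f)
      (fun t => (t : ℂ) ^ r * deriv^[r] f t) (Ioi 0) := by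
  induction r with
  | zero => intro f _ t _; simp [opProdC]
  | succ r ih =>
    intro f hf t ht
    rw [List.range_succ, List.map_append, opProdC_append]
    have h1 : WW r (fun t => 1 * eulerOpC f t + (-(r : ℂ)) * f t) :=
      (hf.euler.smul _).add (hf.pred.smul _)
    have e : opProdC (List.map (fun l : ℕ => ((1 : ℂ), -(l : ℂ))) [r]) f
      = (fun t => 1 * eulerOpC f t + (-(r : ℂ)) * f t) := rfl
    rw [e, ih h1 ht]
    simp only
    rw [iter_lin _ _ hf.euler hf.pred ht]
    have h3 := iter_euler hf ht
    simp only at h3 ⊢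
    rw [h3]
    simp only [eulerOpC]
    rw [Function.iterate_succ_apply']
    ring

lemma op_falling' {r : ℕ} {f : ℝ → ℂ} (hf : WW r f) :
    EqOn (opProdC ((List.range r).map (fun l => ((1 : ℂ), -(l : ℂ)))) f)
      (fun t => (t : ℂ) ^ r * deriv^[r] f t) (Ioi 0) := by
  have := op_falling hf
  convert this using 2
  have e : ∀ l : List ℕ, List.flatMap (fun a : ℕ => [(a : ℂ)]) l = l.map (fun a : ℕ => (a : ℂ)) := by
    intro l
    induction l with
    | nil => rfl
    | cons x l ih => simp [List.flatMap_cons, ih]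
  simp only [List.bind_eq_flatMap, List.pure_def]
  rw [e, List.map_map]
  rfl

/-! Laplace transform -/

/-- Laplace transform -/
noncomputable def lap (h : ℝ → ℂ) (u : ℝ) : ℂ :=
  ∫ τ in Ioi (0 : ℝ), Complex.exp (-(u : ℂ) * (τ : ℂ)) * h τ

lemma norm_cexp (u τ : ℝ) : ‖Complex.exp (-(u : ℂ) * (τ : ℂ))‖ = Real.exp (-u * τ) := by
  rw [Complex.norm_exp]; simp

lemma lap_meas {h : ℝ → ℂ} (hh : W0 h) (u : ℝ) :
    AEStronglyMeasurable (fun τ : ℝ => Complex.exp (-(u : ℂ) * (τ : ℂ)) * h τ)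
      (volume.restrict (Ioi 0)) := by
  refine ContinuousOn.aestronglyMeasurable (ContinuousOn.mul ?_ hh.1) measurableSet_Ioi
  exact Continuous.continuousOn (by fun_prop)

lemma lap_bound {h : ℝ → ℂ} {C b : ℝ} (hC : ∀ τ : ℝ, 0 < τ → ‖h τ‖ ≤ C * Real.exp (b * τ))
    {u τ : ℝ} (hτ : 0 < τ) :
    ‖Complex.exp (-(u : ℂ) * (τ : ℂ)) * h τ‖ ≤ C * Real.exp (-(u - b) * τ) := by
  rw [norm_mul, norm_cexp]
  calc _ ≤ Real.exp (-u * τ) * (C * Real.exp (b * τ)) :=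
        mul_le_mul_of_nonneg_left (hC τ hτ) (Real.exp_nonneg _)
    _ = C * (Real.exp (-u * τ) * Real.exp (b * τ)) := by ring
    _ = _ := by rw [← Real.exp_add]; congr 2; ring

lemma lap_integrable {h : ℝ → ℂ} (hh : W0 h) {u : ℝ} (hu : 0 < u) :
    IntegrableOn (fun τ : ℝ => Complex.exp (-(u : ℂ) * (τ : ℂ)) * h τ) (Ioi 0) := by
  obtain ⟨C, hC⟩ := hh.2.2 (u / 2) (by positivity)
  have hi := (exp_neg_integrableOn_Ioi 0 (b := u - u / 2) (by linarith)).const_mul C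
  refine Integrable.mono' hi (lap_meas hh u) ?_
  filter_upwards [ae_restrict_mem measurableSet_Ioi] with τ hτ
  exact lap_bound hC hτ

lemma lap_hasDerivAt {h : ℝ → ℂ} (hh : W0 h) {u : ℝ} (hu : 0 < u) :
    HasDerivAt (lap h) (-lap (fun t => (t : ℂ) * h t) u) u := by
  have hth := hh.tmul
  obtain ⟨C, hC⟩ := hth.2.2 (u / 4) (by positivity)
  have hi := (exp_neg_integrableOn_Ioi 0 (b := u / 2 - u / 4) (by linarith)).const_mul C
  have := (hasDerivAt_integral_of_dominated_loc_of_deriv_le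
    (μ := volume.restrict (Ioi (0 : ℝ)))
    (F := fun (u : ℝ) (τ : ℝ) => Complex.exp (-(u : ℂ) * (τ : ℂ)) * h τ)
    (F' := fun (u : ℝ) (τ : ℝ) => -(Complex.exp (-(u : ℂ) * (τ : ℂ)) * ((τ : ℂ) * h τ)))
    (x₀ := u) (s := Ioi (u / 2)) (bound := fun τ => C * Real.exp (-(u / 2 - u / 4) * τ))
    (Ioi_mem_nhds (by linarith)) (Eventually.of_forall fun v => lap_meas hh v)
    (lap_integrable hh hu) (lap_meas hth u).neg ?_ hi ?_).2
  · rw [integral_neg] at this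
    exact this
  · filter_upwards [ae_restrict_mem measurableSet_Ioi] with τ hτ v hv
    rw [norm_neg]
    have hτ' : (0 : ℝ) < τ := hτ
    have hv' : u / 2 < v := hv
    have hC0 : 0 ≤ C := by
      have := (norm_nonneg _).trans (hC τ hτ)
      exact nonneg_of_mul_nonneg_left this (Real.exp_pos _)
    refine (lap_bound hC hτ).trans (mul_le_mul_of_nonneg_left (Real.exp_le_exp.2 ?_) hC0)
    nlinarith
  · refine Eventually.of_forall fun τ v _ => ?_
    have h1 : HasDerivAt (fun v : ℝ => -(v : ℂ) * (τ : ℂ)) (-1 * (τ : ℂ)) v :=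
      ((ofReal_hasDerivAt v).neg).mul_const _
    have h2 := (h1.cexp).mul_const (h τ)
    refine h2.congr_deriv ?_
    ring

lemma lap_contDiff (m : ℕ) : ∀ {h : ℝ → ℂ}, W0 h → ContDiffOn ℝ m (lap h) (Ioi 0) := by
  induction m with
  | zero =>
    intro h hh
    exact contDiffOn_zero.2 fun u hu => (lap_hasDerivAt hh hu).continuousAt.continuousWithinAt
  | succ m ih =>
    intro h hh
    push_cast
    rw [contDiffOn_succ_iff_deriv_of_isOpen isOpen_Ioi]
    refine ⟨fun u hu => (lap_hasDerivAt hh hu).differentiableAt.differentiableWithinAt,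
      fun h => by simp at h, ?_⟩
    exact (ih hh.tmul).neg.congr fun u hu => (lap_hasDerivAt hh hu).deriv

lemma lap_deriv {h : ℝ → ℂ} (hh : WW 1 h) {u : ℝ} (hu : 0 < u) :
    lap (deriv h) u = u * lap h u := by
  have hd : W0 (deriv h) := hh.2.2
  have hexp : ∀ τ : ℝ, HasDerivAt (fun τ : ℝ => Complex.exp (-(u : ℂ) * (τ : ℂ)))
      (-(u : ℂ) * Complex.exp (-(u : ℂ) * (τ : ℂ))) τ := fun τ => by
    convert ((ofReal_hasDerivAt τ).const_mul (-(u : ℂ))).cexp using 1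
    ring
  have key := integral_Ioi_mul_deriv_eq_deriv_mul (a := 0) (a' := (0 : ℂ)) (b' := 0)
    (u := fun τ : ℝ => Complex.exp (-(u : ℂ) * (τ : ℂ))) (v := h)
    (u' := fun τ : ℝ => -(u : ℂ) * Complex.exp (-(u : ℂ) * (τ : ℂ))) (v' := deriv h)
    (fun τ _ => hexp τ) (fun τ hτ => (diffAt hh.2.1 hτ).hasDerivAt)
    (lap_integrable hd hu) ?_ ?_ ?_
  · unfold lap
    rw [key, ← integral_const_mul, sub_zero, zero_sub, ← integral_neg]
    congr 1; ext τ; ring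
  · refine ((lap_integrable hh.1 hu).const_mul (-(u : ℂ))).congr (Eventually.of_forall fun τ => ?_)
    simp only [Pi.mul_apply]; ring
  · have h1 : Tendsto (fun τ : ℝ => Complex.exp (-(u : ℂ) * (τ : ℂ))) (𝓝[>] 0) (𝓝 _) :=
      (hexp 0).continuousAt.tendsto.mono_left nhdsWithin_le_nhds
    have h2 := h1.mul hh.1.2.1
    rw [mul_zero] at h2
    exact h2
  · obtain ⟨C, hC⟩ := hh.1.2.2 (u / 2) (by positivity)
    refine squeeze_zero_norm' (a := fun τ => C * Real.exp (-(u - u / 2) * τ)) ?_ ?_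
    · filter_upwards [eventually_gt_atTop 0] with τ hτ using lap_bound hC hτ
    · have : Tendsto (fun τ : ℝ => -(u - u / 2) * τ) atTop atBot :=
        tendsto_id.const_mul_atTop_of_neg (by linarith)
      simpa using (Real.tendsto_exp_atBot.comp this).const_mul C

lemma lap_add {f h : ℝ → ℂ} (hf : W0 f) (hh : W0 h) {u : ℝ} (hu : 0 < u) (a b : ℂ) :
    lap (fun t => a * f t + b * h t) u = a * lap f u + b * lap h u := by
  unfold lap
  rw [← integral_const_mul, ← integral_const_mul, ← integral_add
    ((lap_integrable hf hu).const_mul a) ((lap_integrable hh hu).const_mul b)]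
  congr 1; ext τ; ring

lemma lap_congr {f h : ℝ → ℂ} (e : EqOn f h (Ioi 0)) (u : ℝ) : lap f u = lap h u := by
  refine setIntegral_congr_fun measurableSet_Ioi fun t ht => ?_
  change _ * f t = _ * h t
  rw [e ht]

/-- `u` times Laplace transform -/
noncomputable def ulap (h : ℝ → ℂ) (u : ℝ) : ℂ := u * lap h u

lemma ulap_euler {h : ℝ → ℂ} (hh : WW 1 h) {u : ℝ} (hu : 0 < u) :
    eulerOpC (ulap h) u = - ulap (eulerOpC h) u := by
  have h1 := ((ofReal_hasDerivAt u).mul (lap_hasDerivAt hh.1 hu)).deriv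
  have h1' : deriv (ulap h) u = 1 * lap h u + u * (-lap (fun t => (t : ℂ) * h t) u) := by
    rw [← h1]; rfl
  have h2 := lap_deriv hh.tmul hu
  have e : EqOn (deriv fun t : ℝ => (t : ℂ) * h t)
      (fun t => 1 * h t + 1 * eulerOpC h t) (Ioi 0) := fun t ht => by
    rw [deriv_tmul hh.2.1 ht]; simp [eulerOpC]
  rw [lap_congr e, lap_add hh.1 (WW.euler (k := 0) hh) hu] at h2
  rw [eulerOpC, h1', ulap]
  linear_combination (u : ℂ) * h2

lemma ulap_op {L : List (ℂ × ℂ)} : ∀ {h : ℝ → ℂ}, WW L.length h →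
    EqOn (opProdC (L.map fun p => (-p.1, p.2)) (ulap h)) (ulap (opProdC L h)) (Ioi 0) := by
  induction L with
  | nil => intro h _ t _; rfl
  | cons p L ih =>
    intro h hh u hu
    have h2 := ih hh.pred
    have h1 : WW 1 (opProdC L h) := WW.op (hh.mono (by simp; omega))
    simp only [opProdC_cons, List.map_cons]
    rw [euler_congr h2 hu, ulap_euler h1 hu, h2 hu]
    simp only [ulap]
    rw [lap_add (WW.euler (k := 0) h1) h1.1 hu]
    ring

lemma ulap_iter {r : ℕ} : ∀ {h : ℝ → ℂ}, WW r h → ∀ {u : ℝ}, 0 < u →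
    ulap (deriv^[r] h) u = (u : ℂ) ^ r * ulap h u := by
  induction r with
  | zero => intro h _ u _; simp
  | succ r ih =>
    intro h hh u hu
    rw [Function.iterate_succ_apply, ih hh.2.2 hu, ulap, ulap,
      lap_deriv (hh.mono (by omega)) hu]
    ring

lemma growth {C p b : ℝ} (hb : 0 < b) : ∃ D : ℝ, ∀ τ : ℝ, 0 < τ →
    C * (1 + τ) ^ p ≤ D * Real.exp (b * τ) := by
  obtain ⟨m, hm⟩ := exists_nat_ge p
  refine ⟨|C| * (m.factorial / b ^ m * Real.exp b), fun τ hτ => ?_⟩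
  have h1 : (1 + τ) ^ p ≤ (1 + τ) ^ m := by
    rw [← Real.rpow_natCast]
    exact Real.rpow_le_rpow_of_exponent_le (by linarith) hm
  have h2 := Real.pow_div_factorial_le_exp (b * (1 + τ)) (by positivity) m
  have h3 : (1 + τ) ^ m ≤ m.factorial / b ^ m * Real.exp b * Real.exp (b * τ) := by
    rw [mul_assoc, ← Real.exp_add, show b + b * τ = b * (1 + τ) by ring]
    calc (1 + τ) ^ m = m.factorial / b ^ m * ((b * (1 + τ)) ^ m / m.factorial) := by
          rw [mul_pow]
          have : (m.factorial : ℝ) ≠ 0 := by positivity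
          field_simp
      _ ≤ _ := by gcongr
  calc C * (1 + τ) ^ p ≤ |C| * (1 + τ) ^ p := by gcongr; exact le_abs_self C
    _ ≤ |C| * (m.factorial / b ^ m * Real.exp b * Real.exp (b * τ)) := by
        gcongr; exact h1.trans h3
    _ = _ := by ring

lemma WW.of_hyp {n : ℕ} : ∀ {g : ℝ → ℂ}, ContDiffOn ℝ (n : ℕ∞) g (Ioi 0) →
    (∀ j ≤ n, Tendsto (deriv^[j] g) (𝓝[>] 0) (𝓝 0)) →
    (∃ C p : ℝ, ∀ τ : ℝ, 0 < τ → ∀ j ≤ n, ‖deriv^[j] g τ‖ ≤ C * (1 + τ) ^ p) → WW n g := by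
  have base : ∀ {n : ℕ} {g : ℝ → ℂ}, ContDiffOn ℝ (n : ℕ∞) g (Ioi 0) →
    (∀ j ≤ n, Tendsto (deriv^[j] g) (𝓝[>] 0) (𝓝 0)) →
    (∃ C p : ℝ, ∀ τ : ℝ, 0 < τ → ∀ j ≤ n, ‖deriv^[j] g τ‖ ≤ C * (1 + τ) ^ p) → W0 g := by
    rintro n g h1 h2 ⟨C, p, h3⟩
    refine ⟨h1.continuousOn, h2 0 (Nat.zero_le _), fun b hb => ?_⟩
    obtain ⟨D, hD⟩ := growth (C := C) (p := p) hb
    exact ⟨D, fun τ hτ => (h3 τ hτ 0 (Nat.zero_le _)).trans (hD τ hτ)⟩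
  induction n with
  | zero => intro g h1 h2 h3; exact base h1 h2 h3
  | succ n ih =>
    intro g h1 h2 h3
    have h4 : ContDiffOn ℝ ((n : WithTop ℕ∞) + 1) g (Ioi 0) := by
      convert h1 using 1
      push_cast; rfl
    rw [contDiffOn_succ_iff_deriv_of_isOpen isOpen_Ioi] at h4
    refine ⟨base h1 h2 h3, h4.1, ih (g := deriv g) h4.2.2 (fun j hj => h2 (j + 1) (by omega)) ?_⟩
    obtain ⟨C, p, h⟩ := h3
    exact ⟨C, p, fun τ hτ j hj => h τ hτ (j + 1) (by omega)⟩

end Helpers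

/-- Lemma 5.6, Equation (5.6), of the paper.  Setup: `N ≥ 1`, positive
integers `c_j ∣ d`, `r = Σ c_j − d > 0`, nonnegative rationals `a^j`, complex `λ`,
`n = Σ c_j`.  If `g : (0,∞) → ℂ` is `n`-times continuously differentiable, satisfies the
regularized Picard–Fuchs equation
`τ^r·[∏_j ∏_{l<c_j}(−(c_j/r)θ − l − a^j)] g = [∏_{l<d}((d/r)θ − dλ − l)]∘[∏_{l<r}(θ − l)] g`,
has `g^{(j)} → 0` as `τ → 0⁺` for `j ≤ n`, and all `g^{(j)}` of polynomial growth, then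
`F(u) = u·∫₀^∞ e^{−uτ} g(τ) dτ` is well defined and smooth on `(0,∞)` and satisfies
`[∏_j ∏_{l<c_j}((c_j/r)θ_u − l − a^j)] F = u^r·[∏_{l<d}(−(d/r)θ_u − dλ − l)] F`. -/
theorem stmt_12 (N : ℕ) (hN : 1 ≤ N) (c : Fin N → ℕ) (d r : ℕ)
    (hc : ∀ j, 0 < c j) (hd : 0 < d) (hdvd : ∀ j, c j ∣ d)
    (hr : 0 < r) (hrsum : (∑ j, c j) = d + r)
    (a : Fin N → ℚ) (ha : ∀ j, 0 ≤ a j)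
    (lam : ℂ) (n : ℕ) (hn : n = ∑ j, c j)
    (g : ℝ → ℂ)
    (hg_smooth : ContDiffOn ℝ (n : ℕ∞) g (Set.Ioi 0))
    (hode : ∀ τ : ℝ, 0 < τ →
      (τ : ℂ) ^ (r : ℕ) *
        opProdC (((List.finRange N).map (fun j => (List.range (c j)).map
            (fun l => (-(c j : ℂ) / (r : ℂ), -(l : ℂ) - (a j : ℂ))))).flatten) g τ =
      opProdC ((List.range d).map (fun l => ((d : ℂ) / (r : ℂ), -(d : ℂ) * lam - (l : ℂ))))
        (opProdC ((List.range r).map (fun l => ((1 : ℂ), -(l : ℂ)))) g) τ)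
    (hg0 : ∀ j ≤ n, Filter.Tendsto (deriv^[j] g) (nhdsWithin 0 (Set.Ioi 0)) (nhds 0))
    (hpoly : ∃ C p : ℝ, ∀ τ : ℝ, 0 < τ → ∀ j ≤ n, ‖deriv^[j] g τ‖ ≤ C * (1 + τ) ^ p)
    (F : ℝ → ℂ)
    (hF : ∀ u : ℝ, 0 < u →
      F u = (u : ℂ) * ∫ τ in Set.Ioi (0 : ℝ), Complex.exp (-(u : ℂ) * (τ : ℂ)) * g τ) :
    (∀ u : ℝ, 0 < u →
      IntegrableOn (fun τ : ℝ => Complex.exp (-(u : ℂ) * (τ : ℂ)) * g τ) (Set.Ioi 0)) ∧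
    ContDiffOn ℝ (⊤ : ℕ∞) F (Set.Ioi 0) ∧
    ∀ u : ℝ, 0 < u →
      opProdC (((List.finRange N).map (fun j => (List.range (c j)).map
          (fun l => ((c j : ℂ) / (r : ℂ), -(l : ℂ) - (a j : ℂ))))).flatten) F u =
        (u : ℂ) ^ (r : ℕ) *
          opProdC ((List.range d).map
            (fun l => (-(d : ℂ) / (r : ℂ), -(d : ℂ) * lam - (l : ℂ)))) F u := by
  have hW : WW n g := WW.of_hyp hg_smooth hg0 hpoly
  have hFE : Set.EqOn F (ulap g) (Set.Ioi 0) := fun u hu => hF u hu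
  refine ⟨fun u hu => lap_integrable hW.w0 hu, ?_, fun u hu => ?_⟩
  · refine ContDiffOn.congr ?_ hFE
    refine contDiffOn_infty.2 fun m => ?_
    exact (Complex.ofRealCLM.contDiff.contDiffOn).mul (lap_contDiff m hW.w0)
  · set LA : List (ℂ × ℂ) := ((List.finRange N).map (fun j => (List.range (c j)).map
            (fun l => (-(c j : ℂ) / (r : ℂ), -(l : ℂ) - (a j : ℂ))))).flatten with hLA
    set LD : List (ℂ × ℂ) := (List.range d).map
      (fun l => ((d : ℂ) / (r : ℂ), -(d : ℂ) * lam - (l : ℂ))) with hLD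
    have hlenA : LA.length = n := by
      rw [hn, hLA, List.length_flatten, List.map_map]
      simp [Function.comp_def, List.sum_ofFn, ← List.ofFn_eq_map]
    have hlenD : LD.length = d := by simp [hLD]
    have eA : ((List.finRange N).map (fun j => (List.range (c j)).map
          (fun l => ((c j : ℂ) / (r : ℂ), -(l : ℂ) - (a j : ℂ))))).flatten
        = LA.map fun p => (-p.1, p.2) := by
      rw [hLA, List.map_flatten, List.map_map]
      congr 2
      ext1 j
      simp only [Function.comp_def, List.map_map]
      congr 1
      ext1 l
      simp [neg_div]
    have eD : (List.range d).map
            (fun l => (-(d : ℂ) / (r : ℂ), -(d : ℂ) * lam - (l : ℂ)))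
        = LD.map fun p => (-p.1, p.2) := by
      rw [hLD, List.map_map]
      congr 1
      ext1 l
      simp [neg_div]
    have hnr : n = d + r := hn.trans hrsum
    have hWrd : WW (r + LD.length) g := hW.mono (by omega)
    have key : Set.EqOn (opProdC LA g) (deriv^[r] (opProdC LD g)) (Set.Ioi 0) := by
      intro τ hτ
      have h1 := hode τ hτ
      rw [op_congr (op_falling' (hW.mono (by omega))) hτ,
        op_pow (WW.iter (hW.mono (by omega))) hτ] at h1
      simp only at h1
      rw [← iter_op hWrd hτ] at h1
      have hτ0 : (τ : ℂ) ^ r ≠ 0 := pow_ne_zero _ (by exact_mod_cast (ne_of_gt hτ))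
      exact mul_left_cancel₀ hτ0 h1
    rw [eA, eD, op_congr hFE hu, op_congr hFE hu, ulap_op (hlenA ▸ hW) hu,
      ulap_op (hW.mono (by omega)) hu, ← ulap_iter hWrd.op hu, ulap, ulap, lap_congr key]
end

section
/- Suppose in addition that rational numbers m_j ∈ [0,1) and nonnegative integers M_j are given with a^j = m_j + M_j for each 1 ≤ j ≤ N. Let I_m^{reg}(τ) = Σ_{k₀≥0} A_{k₀}(m)·τ^{r(k₀/d+λ)} and I_a^{reg}(τ) = Σ_{k₀≥0} A_{k₀}(a)·τ^{r(k₀/d+λ)} denote the regularized I-functions with parameters (m₁,…,m_N) and (a¹,…,a^N) respectively. Then for all τ ∈ (0, R), [∏_{j=1}^N ∏_{l=0}^{M_j−1}(−(c_j/r)·θ − l − m_j)] I_m^{reg}(τ) = I_a^{reg}(τ), where θ is the Euler operator θf(τ) = τ·f′(τ) and the product denotes the composition of the indicated commuting first-order operators. -/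
theorem aux_G_step (x : ℝ) : (Real.Gamma x)⁻¹ = x * (Real.Gamma (x + 1))⁻¹ := by
  by_cases hx : x = 0
  · subst hx; simp [Real.Gamma_zero]
  · rw [Real.Gamma_add_one hx, mul_inv, ← mul_assoc, mul_inv_cancel₀ hx, one_mul]

theorem aux_G_up (x : ℝ) (n : ℕ) :
    (Real.Gamma x)⁻¹ = (∏ i ∈ Finset.range n, (x + i)) * (Real.Gamma (x + n))⁻¹ := by
  induction n with
  | zero => simp
  | succ n ih =>
    rw [ih, Finset.prod_range_succ, aux_G_step (x + n)]
    push_cast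
    ring_nf

theorem aux_G_down (s : ℝ) (n : ℕ) :
    (Real.Gamma (s - n))⁻¹ = (∏ l ∈ Finset.range n, (s - 1 - l)) * (Real.Gamma s)⁻¹ := by
  induction n with
  | zero => simp
  | succ n ih =>
    rw [Finset.prod_range_succ, aux_G_step (s - (n + 1 : ℕ))]
    have : s - ((n + 1 : ℕ) : ℝ) + 1 = s - n := by push_cast; ring
    rw [this, ih]
    push_cast
    ring

theorem aux_fact (k n : ℕ) :
    ((k + n).factorial : ℝ) = k.factorial * ∏ i ∈ Finset.range n, ((k : ℝ) + 1 + i) := by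
  induction n with
  | zero => simp
  | succ n ih =>
    rw [← add_assoc, Nat.factorial_succ, Finset.prod_range_succ]
    push_cast
    rw [ih]; ring

theorem aux_exp_bound (b x : ℝ) (hb : 0 < b) : x * Real.exp (-(b * x)) ≤ 1 / b := by
  rw [Real.exp_neg, le_div_iff₀ hb, mul_assoc, mul_comm, mul_assoc]
  rw [inv_mul_le_iff₀ (Real.exp_pos _)]
  have := Real.add_one_le_exp (b * x)
  nlinarith

theorem aux_summable_mul (A e : ℕ → ℝ) (he : ∀ k, 0 < e k) (R : ℝ)
    (hS : ∀ t ∈ Set.Ioo (0:ℝ) R, Summable (fun k => |A k| * t ^ e k)) :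
    ∀ t ∈ Set.Ioo (0:ℝ) R, Summable (fun k => |A k| * e k * t ^ e k) := by
  intro t ht
  obtain ⟨u, htu, huR⟩ := exists_between ht.2
  have hu : 0 < u := ht.1.trans htu
  have hb : 0 < Real.log u - Real.log t := sub_pos.2 (Real.log_lt_log ht.1 htu)
  refine Summable.of_nonneg_of_le (fun k => ?_) (fun k => ?_)
    ((hS u ⟨hu, huR⟩).mul_left (1 / (Real.log u - Real.log t)))
  · have := he k
    have := ht.1
    positivity
  · have h1 := aux_exp_bound _ (e k) hb
    have h2 : t ^ e k = Real.exp (-((Real.log u - Real.log t) * e k)) * u ^ e k := by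
      rw [Real.rpow_def_of_pos ht.1, Real.rpow_def_of_pos hu, ← Real.exp_add]
      congr 1; ring
    have h3 : 0 ≤ |A k| * u ^ e k := by positivity
    calc |A k| * e k * t ^ e k
        = (e k * Real.exp (-((Real.log u - Real.log t) * e k))) * (|A k| * u ^ e k) := by
          rw [h2]; ring
      _ ≤ _ := mul_le_mul_of_nonneg_right h1 h3

theorem aux_deriv (A e : ℕ → ℝ) (he : ∀ k, 0 < e k) (R : ℝ)
    (hS : ∀ t ∈ Set.Ioo (0:ℝ) R, Summable (fun k => |A k| * t ^ e k))
    (t : ℝ) (ht : t ∈ Set.Ioo (0:ℝ) R) :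
    HasDerivAt (fun τ => ∑' k, A k * τ ^ e k) (∑' k, A k * (e k * t ^ (e k - 1))) t := by
  obtain ⟨v, hv0, hvt⟩ := exists_between ht.1
  obtain ⟨u, htu, huR⟩ := exists_between ht.2
  have hu : 0 < u := ht.1.trans htu
  have hsum := (aux_summable_mul A e he R hS u ⟨hu, huR⟩).mul_left (1 / v)
  refine hasDerivAt_tsum_of_isPreconnected (g := fun k τ => A k * τ ^ e k)
    (g' := fun k τ => A k * (e k * τ ^ (e k - 1))) (t := Set.Ioo v u) (y₀ := t) hsum isOpen_Ioo
    isPreconnected_Ioo (fun k y hy => ?_) (fun k y hy => ?_) ⟨hvt, htu⟩ ?_ ⟨hvt, htu⟩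
  · have hy0 : y ≠ 0 := (hv0.trans hy.1).ne'
    exact (Real.hasDerivAt_rpow_const (Or.inl hy0)).const_mul (A k)
  · have hy0 : 0 < y := hv0.trans hy.1
    rw [Real.norm_eq_abs, abs_mul, abs_of_nonneg (a := e k * y ^ (e k - 1))
      (mul_nonneg (he k).le (by positivity)), Real.rpow_sub_one hy0.ne']
    have h1 : y ^ e k ≤ u ^ e k := Real.rpow_le_rpow hy0.le hy.2.le (he k).le
    have h2 : y ^ e k / y ≤ u ^ e k / v := by
      apply div_le_div₀ (by positivity) h1 hv0 hy.1.le
    calc |A k| * (e k * (y ^ e k / y)) ≤ |A k| * (e k * (u ^ e k / v)) := by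
          have := (he k).le
          gcongr
      _ = _ := by ring
  · refine (hS t ht).of_norm_bounded (fun k => ?_)
    rw [Real.norm_eq_abs, abs_mul, abs_of_nonneg (a := t ^ e k) (Real.rpow_nonneg ht.1.le _)]

theorem aux_op (e : ℕ → ℝ) (he : ∀ k, 0 < e k) (R : ℝ) (A : ℕ → ℝ)
    (hS : ∀ t ∈ Set.Ioo (0:ℝ) R, Summable (fun k => |A k| * t ^ e k)) (F : ℝ → ℝ)
    (hF : ∀ t ∈ Set.Ioo (0:ℝ) R, F t = ∑' k, A k * t ^ e k) (L : List (ℝ × ℝ)) :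
    (∀ t ∈ Set.Ioo (0:ℝ) R,
      Summable (fun k => |A k * (L.map (fun p => p.1 * e k + p.2)).prod| * t ^ e k)) ∧
    ∀ t ∈ Set.Ioo (0:ℝ) R, opProdR L F t =
      ∑' k, A k * (L.map (fun p => p.1 * e k + p.2)).prod * t ^ e k := by
  induction L with
  | nil => exact ⟨by simpa only [List.map_nil, List.prod_nil, mul_one] using hS,
      by simpa only [List.map_nil, List.prod_nil, mul_one, opProdR, List.foldr_nil] using hF⟩
  | cons p L ih =>
    obtain ⟨ih1, ih2⟩ := ih
    set B : ℕ → ℝ := fun k => A k * (L.map (fun p => p.1 * e k + p.2)).prod with hB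
    have hm := aux_summable_mul B e he R ih1
    have hcoef : ∀ k, A k * ((p :: L).map (fun p => p.1 * e k + p.2)).prod
        = p.1 * (B k * e k) + p.2 * B k := by
      intro k; simp only [hB, List.map_cons, List.prod_cons]; ring
    simp only [hcoef]
    replace ih1 : ∀ t ∈ Set.Ioo (0:ℝ) R, Summable (fun k => |B k| * t ^ e k) := ih1
    replace ih2 : ∀ t ∈ Set.Ioo (0:ℝ) R, opProdR L F t = ∑' k, B k * t ^ e k := ih2
    clear_value B
    constructor
    · intro t ht
      refine Summable.of_nonneg_of_le (fun k => ?_) (fun k => ?_)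
        (((hm t ht).mul_left |p.1|).add ((ih1 t ht).mul_left |p.2|))
      · have := Real.rpow_nonneg ht.1.le (e k)
        positivity
      · have h0 := Real.rpow_nonneg ht.1.le (e k)
        calc |p.1 * (B k * e k) + p.2 * B k| * t ^ e k
            ≤ (|p.1 * (B k * e k)| + |p.2 * B k|) * t ^ e k :=
              mul_le_mul_of_nonneg_right (abs_add_le _ _) h0
          _ = _ := by
              rw [abs_mul, abs_mul, abs_mul, abs_of_pos (he k)]; ring
    · intro t ht
      have hop : opProdR (p :: L) F t =
          p.1 * (t * deriv (opProdR L F) t) + p.2 * opProdR L F t := rfl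
      have hev : opProdR L F =ᶠ[nhds t] fun τ => ∑' k, B k * τ ^ e k := by
        filter_upwards [isOpen_Ioo.mem_nhds ht] with y hy using ih2 y hy
      rw [hop, hev.deriv_eq, (aux_deriv B e he R ih1 t ht).deriv, ih2 t ht, ← tsum_mul_left,
        ← tsum_mul_left, ← tsum_mul_left]
      have hs1 : Summable fun k => p.1 * (t * (B k * (e k * t ^ (e k - 1)))) := by
        refine ((hm t ht).mul_left |p.1|).of_norm_bounded (fun k => ?_)
        rw [Real.rpow_sub_one ht.1.ne']
        apply le_of_eq
        have : p.1 * (t * (B k * (e k * (t ^ e k / t)))) = p.1 * (B k * e k * t ^ e k) := by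
          have := ht.1.ne'
          field_simp
        rw [this, Real.norm_eq_abs, abs_mul, abs_mul, abs_mul, abs_of_pos (he k),
          abs_of_nonneg (Real.rpow_nonneg ht.1.le (e k))]
      have hs2 : Summable fun k => p.2 * (B k * t ^ e k) := by
        refine ((ih1 t ht).mul_left |p.2|).of_norm_bounded (fun k => ?_)
        rw [Real.norm_eq_abs, abs_mul, abs_mul, abs_of_nonneg (Real.rpow_nonneg ht.1.le (e k))]
      rw [← hs1.tsum_add hs2]
      refine tsum_congr (fun k => ?_)
      rw [Real.rpow_sub_one ht.1.ne']
      have := ht.1.ne'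
      field_simp

theorem aux_ratio (u : ℕ → ℝ) (hu : ∀ k, 0 ≤ u k) (d : ℕ) (hd : 0 < d) (ρ : ℝ) (hρ : ρ < 1)
    (h : ∀ᶠ k in Filter.atTop, u (k + d) ≤ ρ * u k) : Summable u := by
  have : NeZero d := ⟨hd.ne'⟩
  rw [← (Nat.divModEquiv d).symm.summable_iff, ← (Equiv.prodComm _ _).summable_iff]
  refine (summable_prod_of_nonneg (f := (u ∘ (Nat.divModEquiv d).symm) ∘ (Equiv.prodComm (Fin d) ℕ))
    (fun _ => hu _)).2 ⟨fun i => ?_, Summable.of_finite⟩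
  refine summable_of_ratio_norm_eventually_le hρ ?_
  have ht : Filter.Tendsto (fun n : ℕ => n * d + (i : ℕ)) Filter.atTop Filter.atTop :=
    Filter.tendsto_atTop_mono (fun n => le_add_right (Nat.le_mul_of_pos_right n hd)) Filter.tendsto_id
  filter_upwards [ht.eventually h] with n hn
  simp only [Function.comp, Equiv.prodComm_apply, Prod.swap, Nat.divModEquiv_symm_apply,
    Real.norm_eq_abs, abs_of_nonneg (hu _)]
  convert hn using 2
  ring

theorem aux_lin (α β : ℝ) :
    Filter.Tendsto (fun k : ℕ => (α * (k : ℝ) + β) / k) Filter.atTop (nhds α) := by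
  have h : Filter.Tendsto (fun k : ℕ => α + β / (k : ℝ)) Filter.atTop (nhds (α + 0)) :=
    tendsto_const_nhds.add (tendsto_const_div_atTop_nhds_zero_nat β)
  rw [add_zero] at h
  refine h.congr' ?_
  filter_upwards [Filter.eventually_gt_atTop 0] with k hk
  have : (k : ℝ) ≠ 0 := by positivity
  field_simp

theorem aux_prod_lin (α : ℝ) (β : ℕ → ℝ) (n : ℕ) :
    Filter.Tendsto (fun k : ℕ => (∏ i ∈ Finset.range n, (α * (k : ℝ) + β i)) / (k : ℝ) ^ n)
      Filter.atTop (nhds (α ^ n)) := by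
  have h := tendsto_finsetProd (Finset.range n)
    (fun i (_ : i ∈ Finset.range n) => aux_lin α (β i))
  simpa [Finset.prod_div_distrib] using h

/-- common shape of the coefficients -/
theorem aux_recur (N : ℕ) (c : Fin N → ℕ) (d r : ℕ) (hd : 0 < d) (m : Fin N → ℚ) (lam : ℝ)
    (hpos : 0 < lam) (Am : ℕ → ℝ)
    (hAm : ∀ k₀ : ℕ, Am k₀ =
      (1 / (Real.Gamma (1 + (r : ℝ) * ((k₀ : ℝ) / (d : ℝ) + lam)) * (k₀.factorial : ℝ))) *
        ∏ j, Real.Gamma (1 - (c j : ℝ) * lam -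
              Int.fract ((k₀ : ℝ) * ((c j : ℝ) / (d : ℝ)) + (m j : ℝ))) /
          Real.Gamma (1 - (c j : ℝ) * lam - (k₀ : ℝ) * ((c j : ℝ) / (d : ℝ)) - (m j : ℝ)))
    (k : ℕ) :
    Am k * (∏ j, ∏ l ∈ Finset.range (c j), (-((c j : ℝ) / d) * k + (-(c j : ℝ) * lam - m j - l)))
      = Am (k + d) * ((∏ i ∈ Finset.range r, (((r : ℝ) / d) * k + (1 + r * lam + i))) *
        ∏ i ∈ Finset.range d, ((1 : ℝ) * k + (1 + i))) := by
  have hd' : (d : ℝ) ≠ 0 := by positivity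
  rw [hAm k, hAm (k + d)]
  have e1 : 1 + (r : ℝ) * (((k + d : ℕ) : ℝ) / d + lam) = 1 + (r : ℝ) * ((k : ℝ) / d + lam) + r := by
    push_cast; field_simp; ring
  have e2 : ∀ j, ((k + d : ℕ) : ℝ) * ((c j : ℝ) / d) = (k : ℝ) * ((c j : ℝ) / d) + (c j : ℕ) := by
    intro j; push_cast; field_simp
  have e3 : ∀ j, Int.fract (((k + d : ℕ) : ℝ) * ((c j : ℝ) / d) + (m j : ℝ))
      = Int.fract ((k : ℝ) * ((c j : ℝ) / d) + (m j : ℝ)) := by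
    intro j
    rw [e2, add_right_comm, Int.fract_add_natCast]
  have e4 : ∀ j, (Real.Gamma (1 - (c j : ℝ) * lam - ((k + d : ℕ) : ℝ) * ((c j : ℝ) / d) - m j))⁻¹
      = (∏ l ∈ Finset.range (c j), (-((c j : ℝ) / d) * k + (-(c j : ℝ) * lam - m j - l))) *
        (Real.Gamma (1 - (c j : ℝ) * lam - (k : ℝ) * ((c j : ℝ) / d) - m j))⁻¹ := by
    intro j
    have : 1 - (c j : ℝ) * lam - ((k + d : ℕ) : ℝ) * ((c j : ℝ) / d) - m j
      = (1 - (c j : ℝ) * lam - (k : ℝ) * ((c j : ℝ) / d) - m j) - (c j : ℕ) := by rw [e2]; ring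
    rw [this, aux_G_down]
    congr 1
    refine Finset.prod_congr rfl (fun l _ => ?_)
    ring
  have e5 := aux_G_up (1 + (r : ℝ) * ((k : ℝ) / d + lam)) r
  have e6 : ∏ i ∈ Finset.range r, (1 + (r : ℝ) * ((k : ℝ) / d + lam) + i) =
      ∏ i ∈ Finset.range r, (((r : ℝ) / d) * k + (1 + r * lam + i)) :=
    Finset.prod_congr rfl (fun i _ => by ring)
  have e7 : ∏ i ∈ Finset.range d, ((k : ℝ) + 1 + i) = ∏ i ∈ Finset.range d, ((1 : ℝ) * k + (1 + i)) :=
    Finset.prod_congr rfl (fun i _ => by ring)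
  have e8 := aux_fact k d
  rw [e7] at e8
  rw [e6] at e5
  rw [e1, e8]
  simp only [div_eq_mul_inv (Real.Gamma _), e3, e4, Finset.prod_mul_distrib, one_div, mul_inv]
  rw [e5]
  have hQ : ∏ i ∈ Finset.range d, ((1 : ℝ) * k + (1 + i)) ≠ 0 :=
    Finset.prod_ne_zero_iff.2 (fun i _ => by positivity)
  have hk : (k.factorial : ℝ) ≠ 0 := by positivity
  field_simp

theorem aux_summable_A (N : ℕ) (c : Fin N → ℕ) (d r : ℕ)
    (hc : ∀ j, 0 < c j) (hd : 0 < d) (hr : 0 < r) (hrsum : (∑ j, c j) = d + r)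
    (m : Fin N → ℚ) (lam : ℝ) (hpos : 0 < lam) (Am : ℕ → ℝ)
    (hAm : ∀ k₀ : ℕ, Am k₀ =
      (1 / (Real.Gamma (1 + (r : ℝ) * ((k₀ : ℝ) / (d : ℝ) + lam)) * (k₀.factorial : ℝ))) *
        ∏ j, Real.Gamma (1 - (c j : ℝ) * lam -
              Int.fract ((k₀ : ℝ) * ((c j : ℝ) / (d : ℝ)) + (m j : ℝ))) /
          Real.Gamma (1 - (c j : ℝ) * lam - (k₀ : ℝ) * ((c j : ℝ) / (d : ℝ)) - (m j : ℝ)))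
    (R : ℝ)
    (hR : R = ((r : ℝ) ^ (r : ℝ) * (d : ℝ) ^ (d : ℝ) *
      ∏ j, (c j : ℝ) ^ (-(c j : ℝ))) ^ ((1 : ℝ) / (r : ℝ))) :
    ∀ t ∈ Set.Ioo (0:ℝ) R,
      Summable (fun k : ℕ => |Am k| * t ^ ((r : ℝ) * ((k : ℝ) / (d : ℝ) + lam))) := by
  intro t ht
  have hd' : (0 : ℝ) < d := by positivity
  have hr' : (0 : ℝ) < r := by positivity
  have hc' : ∀ j, (0 : ℝ) < c j := fun j => by exact_mod_cast hc j
  have ht0 := ht.1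
  set T : ℕ → ℝ := fun k => ∏ j, ∏ l ∈ Finset.range (c j),
    (-((c j : ℝ) / d) * k + (-(c j : ℝ) * lam - m j - l)) with hT
  set P : ℕ → ℝ := fun k => ∏ i ∈ Finset.range r, (((r : ℝ) / d) * k + (1 + r * lam + i)) with hP
  set Q : ℕ → ℝ := fun k => ∏ i ∈ Finset.range d, ((1 : ℝ) * k + (1 + i)) with hQ
  have hPpos : ∀ k, 0 < P k := fun k => Finset.prod_pos (fun i _ => by positivity)
  have hQpos : ∀ k, 0 < Q k := fun k => Finset.prod_pos (fun i _ => by positivity)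
  have hTl : Filter.Tendsto (fun k : ℕ => T k / (k : ℝ) ^ (d + r)) Filter.atTop
      (nhds (∏ j, (-((c j : ℝ) / d)) ^ c j)) := by
    have := tendsto_finsetProd Finset.univ (fun j (_ : j ∈ Finset.univ) =>
      aux_prod_lin (-((c j : ℝ) / d)) (fun l => -(c j : ℝ) * lam - m j - l) (c j))
    refine this.congr (fun k => ?_)
    rw [Finset.prod_div_distrib, Finset.prod_pow_eq_pow_sum, hrsum]
  have hPl : Filter.Tendsto (fun k : ℕ => P k / (k : ℝ) ^ r) Filter.atTop
      (nhds (((r : ℝ) / d) ^ r)) := aux_prod_lin _ (fun i => 1 + r * lam + i) r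
  have hQl : Filter.Tendsto (fun k : ℕ => Q k / (k : ℝ) ^ d) Filter.atTop
      (nhds (1 ^ d)) := aux_prod_lin _ (fun i => 1 + i) d
  have hlim := (hTl.abs.const_mul (t ^ r)).div (hPl.mul hQl) (by positivity)
  have habs : |∏ j, (-((c j : ℝ) / d)) ^ c j| = (∏ j, (c j : ℝ) ^ c j) / (d : ℝ) ^ (d + r) := by
    rw [Finset.abs_prod, ← hrsum, ← Finset.prod_pow_eq_pow_sum, ← Finset.prod_div_distrib]
    refine Finset.prod_congr rfl (fun j _ => ?_)
    have := hc' j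
    rw [abs_pow, abs_neg, abs_of_pos (by positivity), div_pow]
  have hRr : t ^ r < (r : ℝ) ^ r * (d : ℝ) ^ d / ∏ j, (c j : ℝ) ^ c j := by
    have hX : ((r : ℝ) ^ (r : ℝ) * (d : ℝ) ^ (d : ℝ) * ∏ j, (c j : ℝ) ^ (-(c j : ℝ)))
        = (r : ℝ) ^ r * (d : ℝ) ^ d / ∏ j, (c j : ℝ) ^ c j := by
      rw [div_eq_mul_inv, ← Finset.prod_inv_distrib, Real.rpow_natCast, Real.rpow_natCast]
      congr 1
      refine Finset.prod_congr rfl (fun j _ => ?_)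
      rw [Real.rpow_neg (hc' j).le, Real.rpow_natCast]
    have hX0 : 0 ≤ (r : ℝ) ^ r * (d : ℝ) ^ d / ∏ j, (c j : ℝ) ^ c j := by
      have : 0 ≤ ∏ j, (c j : ℝ) ^ c j := Finset.prod_nonneg (fun j _ => by positivity)
      positivity
    have h1 : t ^ r < R ^ r := pow_lt_pow_left₀ ht.2 ht0.le hr.ne'
    rw [hR, hX, one_div, Real.rpow_inv_natCast_pow hX0 hr.ne'] at h1
    exact h1
  have hC : 0 < ∏ j, (c j : ℝ) ^ c j := Finset.prod_pos (fun j _ => pow_pos (hc' j) _)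
  have hl : t ^ r * |∏ j, (-((c j : ℝ) / d)) ^ c j| / (((r : ℝ) / d) ^ r * 1 ^ d) < 1 := by
    rw [habs, div_lt_one (by positivity), one_pow, mul_one, div_pow]
    rw [lt_div_iff₀ hC] at hRr
    rw [← mul_div_assoc, div_lt_div_iff₀ (by positivity) (by positivity), pow_add]
    have : 0 < (d : ℝ) ^ r := by positivity
    nlinarith
  obtain ⟨ρ, hρ1, hρ2⟩ := exists_between hl
  refine aux_ratio _ (fun k => mul_nonneg (abs_nonneg _) (Real.rpow_nonneg ht0.le _)) d hd ρ hρ2 ?_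
  filter_upwards [hlim.eventually_lt_const hρ1, Filter.eventually_gt_atTop 0] with k hk hk0
  have hk' : (0 : ℝ) < k := by exact_mod_cast hk0
  have hrec := aux_recur N c d r hd m lam hpos Am hAm k
  change Am k * T k = Am (k + d) * (P k * Q k) at hrec
  have hPQ : 0 < P k * Q k := mul_pos (hPpos k) (hQpos k)
  have hk2 : t ^ r * |T k| ≤ ρ * (P k * Q k) := by
    have : t ^ r * |T k / (k : ℝ) ^ (d + r)| / (P k / (k : ℝ) ^ r * (Q k / (k : ℝ) ^ d))
        = t ^ r * |T k| / (P k * Q k) := by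
      have := (hPpos k).ne'
      have := (hQpos k).ne'
      rw [abs_div, abs_of_pos (pow_pos hk' _), pow_add]
      field_simp
    have hk3 : t ^ r * |T k| / (P k * Q k) < ρ := by rw [← this]; exact hk
    rw [div_lt_iff₀ hPQ] at hk3
    exact hk3.le
  have hrec' : |Am k| * |T k| = |Am (k + d)| * (P k * Q k) := by
    rw [← abs_mul, hrec, abs_mul, abs_of_pos hPQ]
  have hpow : t ^ ((r : ℝ) * (((k + d : ℕ) : ℝ) / d + lam))
      = t ^ ((r : ℝ) * ((k : ℝ) / d + lam)) * t ^ r := by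
    rw [← Real.rpow_natCast t r, ← Real.rpow_add ht0]
    congr 1
    push_cast; field_simp; ring
  rw [hpow]
  have hw : 0 ≤ t ^ ((r : ℝ) * ((k : ℝ) / d + lam)) := Real.rpow_nonneg ht0.le _
  set w := t ^ ((r : ℝ) * ((k : ℝ) / d + lam))
  refine le_of_mul_le_mul_right ?_ hPQ
  calc |Am (k + d)| * (w * t ^ r) * (P k * Q k) = (|Am (k + d)| * (P k * Q k)) * (w * t ^ r) := by ring
    _ = (|Am k| * w) * (t ^ r * |T k|) := by rw [← hrec']; ring
    _ ≤ (|Am k| * w) * (ρ * (P k * Q k)) :=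
      mul_le_mul_of_nonneg_left hk2 (mul_nonneg (abs_nonneg _) hw)
    _ = _ := by ring

/-- second assertion of Lemma 5.6, Equation (5.7), of the paper.
Setup as in Statement 9, with in addition rationals `m_j ∈ [0,1)` and nonnegative integers
`M_j` such that `a^j = m_j + M_j`.  Let `I_m^{reg}` and `I_a^{reg}` denote the regularized
`I`-functions with parameters `(m_j)` and `(a^j)` respectively.  Then on `(0, R)`,
`[∏_j ∏_{l<M_j}(−(c_j/r)θ − l − m_j)] I_m^{reg} = I_a^{reg}`. -/
theorem stmt_13 (N : ℕ) (hN : 1 ≤ N) (c : Fin N → ℕ) (d r : ℕ)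
    (hc : ∀ j, 0 < c j) (hd : 0 < d) (hdvd : ∀ j, c j ∣ d)
    (hr : 0 < r) (hrsum : (∑ j, c j) = d + r)
    (a m : Fin N → ℚ) (ha : ∀ j, 0 ≤ a j)
    (hm : ∀ j, 0 ≤ m j ∧ m j < 1)
    (M : Fin N → ℕ) (hma : ∀ j, a j = m j + (M j : ℚ))
    (lam : ℝ) (hpos : 0 < lam) (hirr : Irrational lam)
    (Am Aa : ℕ → ℝ)
    (hAm : ∀ k₀ : ℕ, Am k₀ =
      (1 / (Real.Gamma (1 + (r : ℝ) * ((k₀ : ℝ) / (d : ℝ) + lam)) * (k₀.factorial : ℝ))) *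
        ∏ j, Real.Gamma (1 - (c j : ℝ) * lam -
              Int.fract ((k₀ : ℝ) * ((c j : ℝ) / (d : ℝ)) + (m j : ℝ))) /
          Real.Gamma (1 - (c j : ℝ) * lam - (k₀ : ℝ) * ((c j : ℝ) / (d : ℝ)) - (m j : ℝ)))
    (hAa : ∀ k₀ : ℕ, Aa k₀ =
      (1 / (Real.Gamma (1 + (r : ℝ) * ((k₀ : ℝ) / (d : ℝ) + lam)) * (k₀.factorial : ℝ))) *
        ∏ j, Real.Gamma (1 - (c j : ℝ) * lam -
              Int.fract ((k₀ : ℝ) * ((c j : ℝ) / (d : ℝ)) + (a j : ℝ))) /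
          Real.Gamma (1 - (c j : ℝ) * lam - (k₀ : ℝ) * ((c j : ℝ) / (d : ℝ)) - (a j : ℝ)))
    (R : ℝ)
    (hR : R = ((r : ℝ) ^ (r : ℝ) * (d : ℝ) ^ (d : ℝ) *
      ∏ j, (c j : ℝ) ^ (-(c j : ℝ))) ^ ((1 : ℝ) / (r : ℝ)))
    (Im Ia : ℝ → ℝ)
    (hIm : ∀ τ ∈ Set.Ioo (0 : ℝ) R,
      Im τ = ∑' k₀ : ℕ, Am k₀ * τ ^ ((r : ℝ) * ((k₀ : ℝ) / (d : ℝ) + lam)))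
    (hIa : ∀ τ ∈ Set.Ioo (0 : ℝ) R,
      Ia τ = ∑' k₀ : ℕ, Aa k₀ * τ ^ ((r : ℝ) * ((k₀ : ℝ) / (d : ℝ) + lam))) :
    ∀ τ ∈ Set.Ioo (0 : ℝ) R,
      opProdR (((List.finRange N).map (fun j => (List.range (M j)).map
          (fun l => (-(c j : ℝ) / (r : ℝ), -(l : ℝ) - (m j : ℝ))))).flatten) Im τ = Ia τ := by
  have hd' : (0 : ℝ) < d := by positivity
  have hr' : (0 : ℝ) < r := by positivity
  intro τ hτ
  have hS := aux_summable_A N c d r hc hd hr hrsum m lam hpos Am hAm R hR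
  have key := (aux_op (fun k : ℕ => (r : ℝ) * ((k : ℝ) / (d : ℝ) + lam))
    (fun k => by positivity) R Am hS Im hIm (((List.finRange N).map (fun j => (List.range (M j)).map
          (fun l => (-(c j : ℝ) / (r : ℝ), -(l : ℝ) - (m j : ℝ))))).flatten)).2 τ hτ
  rw [key, hIa τ hτ]
  refine tsum_congr (fun k => ?_)
  congr 1
  have hprod : ((((List.finRange N).map (fun j => (List.range (M j)).map
          (fun l => (-(c j : ℝ) / (r : ℝ), -(l : ℝ) - (m j : ℝ))))).flatten).map
          (fun p : ℝ × ℝ => p.1 * ((r : ℝ) * ((k : ℝ) / (d : ℝ) + lam)) + p.2)).prod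
      = ∏ j, ∏ l ∈ Finset.range (M j),
        (1 - (c j : ℝ) * lam - (k : ℝ) * ((c j : ℝ) / (d : ℝ)) - (m j : ℝ) - 1 - l) := by
    rw [List.map_flatten, List.prod_flatten, List.map_map, List.map_map, Fin.prod_univ_def]
    congr 1
    refine List.map_congr_left (fun j _ => ?_)
    have hcast : (do let a ← List.range (M j); pure (a : ℝ)) =
        (List.range (M j)).map (fun a : ℕ => (a : ℝ)) := by
      exact List.flatMap_pure_eq_map _ _
    simp only [Function.comp, hcast, List.map_map]
    rw [Finset.prod_eq_multiset_prod, Finset.range_val, Multiset.range, Multiset.map_coe,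
      Multiset.prod_coe]
    congr 1
    refine List.map_congr_left (fun l _ => ?_)
    simp only [Function.comp]
    field_simp
    ring
  rw [hprod, hAm k, hAa k, mul_assoc, ← Finset.prod_mul_distrib]
  congr 1
  refine Finset.prod_congr rfl (fun j _ => ?_)
  have hja : (a j : ℝ) = (m j : ℝ) + (M j : ℕ) := by rw [hma j]; push_cast; rfl
  rw [hja, ← add_assoc, Int.fract_add_natCast, ← sub_sub, div_eq_mul_inv (Real.Gamma _),
    div_eq_mul_inv (Real.Gamma _), aux_G_down]
  ring
end

section
/- Set n = c₁+⋯+c_N. Let g : (0,∞) → C be n-times continuously differentiable satisfying: (i) the regularized Picard–Fuchs equation τ^r · [∏_{j=1}^N ∏_{l=0}^{c_j−1}(−(c_j/r)·θ − l − a^j)] g(τ) = [∏_{l=0}^{d−1}((d/r)·θ − dλ − l)] ∘ [∏_{l=0}^{r−1}(θ − l)] g(τ) for all τ > 0; (ii) g^{(j)}(τ) → 0 as τ → 0⁺ for every 0 ≤ j ≤ n; (iii) |g^{(j)}(τ)| ≤ C(1+τ)^p for all τ > 0, 0 ≤ j ≤ n, for some constants C, p. Define F(u) = u·∫₀^∞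 e^{−uτ} g(τ) dτ for u > 0 and G(q) = F(q^{1/r}) for q > 0. Then G is infinitely differentiable on (0,∞) and satisfies [∏_{j=1}^N ∏_{l=0}^{c_j−1}(c_j·θ_q − l − a^j)] G(q) = q · [∏_{l=0}^{d−1}(−d·θ_q − dλ − l)] G(q) for all q > 0, where θ (resp. θ_q) denotes the Euler operator τ·d/dτ (resp. q·d/dq). -/
open MeasureTheory

namespace S14
open Set Filter Topology

/-- subexponential growth -/
def PB (h : ℝ → ℂ) : Prop := ∀ ε : ℝ, 0 < ε → ∃ C : ℝ, ∀ τ : ℝ, 0 < τ → ‖h τ‖ ≤ C * Real.exp (ε * τ)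

lemma PB.add {f h : ℝ → ℂ} (hf : PB f) (hh : PB h) : PB (fun τ => f τ + h τ) := by
  intro ε hε
  obtain ⟨A, hA⟩ := hf ε hε
  obtain ⟨B, hB⟩ := hh ε hε
  refine ⟨A + B, fun τ hτ => (norm_add_le _ _).trans ?_⟩
  rw [add_mul]
  exact add_le_add (hA τ hτ) (hB τ hτ)

lemma PB.cmul {f : ℝ → ℂ} (hf : PB f) (c : ℂ) : PB (fun τ => c * f τ) := by
  intro ε hε
  obtain ⟨A, hA⟩ := hf ε hε
  refine ⟨‖c‖ * A, fun τ hτ => ?_⟩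
  rw [norm_mul, mul_assoc]
  exact mul_le_mul_of_nonneg_left (hA τ hτ) (norm_nonneg _)

lemma PB.tmul {f : ℝ → ℂ} (hf : PB f) : PB (fun τ => (τ : ℂ) * f τ) := by
  intro ε hε
  obtain ⟨A, hA⟩ := hf (ε / 2) (by positivity)
  refine ⟨2 / ε * A, fun τ hτ => ?_⟩
  rw [norm_mul, Complex.norm_real, Real.norm_of_nonneg hτ.le]
  have h1 : τ ≤ 2 / ε * Real.exp (ε / 2 * τ) := by
    have := Real.add_one_le_exp (ε / 2 * τ)
    calc τ = 2 / ε * (ε / 2 * τ) := by field_simp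
      _ ≤ _ := mul_le_mul_of_nonneg_left (by linarith) (by positivity)
  calc τ * ‖f τ‖ ≤ (2 / ε * Real.exp (ε / 2 * τ)) * (A * Real.exp (ε / 2 * τ)) :=
        mul_le_mul h1 (hA τ hτ) (norm_nonneg _) (by positivity)
    _ = 2 / ε * A * (Real.exp (ε / 2 * τ) * Real.exp (ε / 2 * τ)) := by ring
    _ = _ := by rw [← Real.exp_add]; ring_nf

lemma PB.congr {f h : ℝ → ℂ} (hf : PB f) (e : EqOn f h (Ioi 0)) : PB h := by
  intro ε hε
  obtain ⟨A, hA⟩ := hf ε hε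
  exact ⟨A, fun τ hτ => e hτ ▸ hA τ hτ⟩

lemma PB.of_poly {f : ℝ → ℂ} {C p : ℝ} (hf : ∀ τ : ℝ, 0 < τ → ‖f τ‖ ≤ C * (1 + τ) ^ p) : PB f := by
  intro ε hε
  set m : ℝ := |p| + 1
  have hm : 0 < m := by positivity
  set δ := ε / m
  have hδ : 0 < δ := by positivity
  refine ⟨|C| * (1 + 1 / δ) ^ m, fun τ hτ => (hf τ hτ).trans ?_⟩
  have h1 : 1 + τ ≤ (1 + 1 / δ) * Real.exp (δ * τ) := by
    have h2 := Real.add_one_le_exp (δ * τ)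
    have h3 : (1 + 1 / δ) * (δ * τ + 1) = 1 + τ + (δ * τ + 1 / δ) := by field_simp; ring
    have h4 : (1 + 1 / δ) * (δ * τ + 1) ≤ (1 + 1 / δ) * Real.exp (δ * τ) :=
      mul_le_mul_of_nonneg_left h2 (by positivity)
    have : 0 ≤ δ * τ + 1 / δ := by positivity
    linarith
  calc C * (1 + τ) ^ p ≤ |C| * (1 + τ) ^ m := by
        refine mul_le_mul (le_abs_self _) ?_ (by positivity) (abs_nonneg _)
        exact Real.rpow_le_rpow_of_exponent_le (by linarith) (by have := le_abs_self p; simp only [m]; linarith)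
    _ ≤ |C| * ((1 + 1 / δ) * Real.exp (δ * τ)) ^ m := by
        gcongr
    _ = |C| * (1 + 1 / δ) ^ m * Real.exp (ε * τ) := by
        rw [Real.mul_rpow (by positivity) (by positivity), ← Real.exp_mul]
        have : δ * τ * m = ε * τ := by simp only [δ]; field_simp
        rw [this]; ring

/-- regularity class -/
def Good : ℕ → (ℝ → ℂ) → Prop
  | 0, h => ContinuousOn h (Ioi 0) ∧ PB h
  | k + 1, h => DifferentiableOn ℝ h (Ioi 0) ∧ PB h ∧ Good k (deriv h)

lemma Good.base {k : ℕ} {h : ℝ → ℂ} (H : Good k h) : ContinuousOn h (Ioi 0) ∧ PB h := by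
  cases k with
  | zero => exact H
  | succ k => exact ⟨H.1.continuousOn, H.2.1⟩

lemma Good.pred {k : ℕ} : ∀ {h : ℝ → ℂ}, Good (k + 1) h → Good k h := by
  induction k with
  | zero => intro h H; exact H.base
  | succ k ih => intro h H; exact ⟨H.1, H.2.1, ih H.2.2⟩

lemma deriv_eqOn {f h : ℝ → ℂ} (e : EqOn f h (Ioi 0)) : EqOn (deriv f) (deriv h) (Ioi 0) :=
  e.deriv isOpen_Ioi

lemma Good.congr {k : ℕ} : ∀ {f h : ℝ → ℂ}, Good k f → EqOn f h (Ioi 0) → Good k h := by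
  induction k with
  | zero => intro f h H e; exact ⟨H.1.congr e.symm, H.2.congr e⟩
  | succ k ih =>
    intro f h H e
    exact ⟨H.1.congr e.symm, H.2.1.congr e, ih H.2.2 (deriv_eqOn e)⟩

lemma dAt {f : ℝ → ℂ} (hf : DifferentiableOn ℝ f (Ioi 0)) {x : ℝ} (hx : x ∈ Ioi (0:ℝ)) :
    DifferentiableAt ℝ f x := hf.differentiableAt (Ioi_mem_nhds hx)

lemma hasDerivAt_cast (x : ℝ) : HasDerivAt (fun τ : ℝ => (τ : ℂ)) 1 x := Complex.ofRealCLM.hasDerivAt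

lemma Good.add {k : ℕ} : ∀ {f h : ℝ → ℂ}, Good k f → Good k h → Good k (fun τ => f τ + h τ) := by
  induction k with
  | zero => intro f h H K; exact ⟨H.1.add K.1, H.2.add K.2⟩
  | succ k ih =>
    intro f h H K
    refine ⟨H.1.add K.1, H.2.1.add K.2.1, (ih H.2.2 K.2.2).congr ?_⟩
    intro x hx
    exact ((dAt H.1 hx).hasDerivAt.add (dAt K.1 hx).hasDerivAt).deriv.symm

lemma Good.cmul {k : ℕ} (c : ℂ) : ∀ {f : ℝ → ℂ}, Good k f → Good k (fun τ => c * f τ) := by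
  induction k with
  | zero => intro f H; exact ⟨continuousOn_const.mul H.1, H.2.cmul c⟩
  | succ k ih =>
    intro f H
    refine ⟨H.1.const_mul c, H.2.1.cmul c, (ih H.2.2).congr ?_⟩
    intro x hx
    exact ((dAt H.1 hx).hasDerivAt.const_mul c).deriv.symm

lemma hasDerivAt_tmul {f : ℝ → ℂ} (hf : DifferentiableOn ℝ f (Ioi 0)) {x : ℝ} (hx : x ∈ Ioi (0:ℝ)) :
    HasDerivAt (fun τ : ℝ => (τ : ℂ) * f τ) (f x + x * deriv f x) x := by
  have := (hasDerivAt_cast x).mul (dAt hf hx).hasDerivAt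
  rwa [one_mul] at this

lemma Good.tmul {k : ℕ} : ∀ {f : ℝ → ℂ}, Good k f → Good k (fun τ => (τ : ℂ) * f τ) := by
  induction k with
  | zero => intro f H; exact ⟨Complex.continuous_ofReal.continuousOn.mul H.1, H.2.tmul⟩
  | succ k ih =>
    intro f H
    refine ⟨fun x hx => (hasDerivAt_tmul H.1 hx).differentiableAt.differentiableWithinAt,
      H.2.1.tmul, (H.pred.add (ih H.2.2)).congr ?_⟩
    intro x hx
    exact (hasDerivAt_tmul H.1 hx).deriv.symm

lemma opProdC_cons (p : ℂ × ℂ) (L : List (ℂ × ℂ)) (f : ℝ → ℂ) :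
    opProdC (p :: L) f = fun τ : ℝ => p.1 * ((τ : ℂ) * deriv (opProdC L f) τ) + p.2 * opProdC L f τ := rfl

lemma opProdC_append (L M : List (ℂ × ℂ)) (f : ℝ → ℂ) :
    opProdC (L ++ M) f = opProdC L (opProdC M f) := by
  simp [opProdC, List.foldr_append]

lemma opProdC_congr (L : List (ℂ × ℂ)) {f h : ℝ → ℂ} (e : EqOn f h (Ioi 0)) :
    EqOn (opProdC L f) (opProdC L h) (Ioi 0) := by
  induction L with
  | nil => exact e
  | cons p L ih =>
    intro x hx
    simp only [opProdC_cons, ih hx, deriv_eqOn ih hx]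

lemma Good.opProd (L : List (ℂ × ℂ)) : ∀ {k : ℕ} {f : ℝ → ℂ}, Good (k + L.length) f → Good k (opProdC L f) := by
  induction L with
  | nil => intro k f H; exact H
  | cons p L ih =>
    intro k f H
    have := ih (k := k + 1) (f := f) (by convert H using 1; simp; omega)
    exact (this.2.2.tmul.cmul p.1).add (this.pred.cmul p.2)

lemma Good.of_cd {k : ℕ} : ∀ {f : ℝ → ℂ}, ContDiffOn ℝ (k : ℕ∞) f (Ioi 0) →
    (∀ j ≤ k, PB (deriv^[j] f)) → Good k f := by
  induction k with
  | zero => intro f H B; exact ⟨H.continuousOn, B 0 le_rfl⟩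
  | succ k ih =>
    intro f H B
    have H' : ContDiffOn ℝ ((k : ℕ∞) + 1 : WithTop ℕ∞) f (Ioi 0) := by exact_mod_cast H
    rw [contDiffOn_succ_iff_deriv_of_isOpen isOpen_Ioi] at H'
    exact ⟨H'.1, B 0 (by omega), ih H'.2.2 (fun j hj => B (j + 1) (by omega))⟩

lemma Good.iter {k : ℕ} (j : ℕ) : ∀ {f : ℝ → ℂ}, Good (k + j) f → Good k (deriv^[j] f) := by
  induction j with
  | zero => intro f H; exact H
  | succ j ih => intro f H; exact ih (f := deriv f) H.2.2

lemma iter_congr (j : ℕ) : ∀ {f h : ℝ → ℂ}, EqOn f h (Ioi 0) → EqOn (deriv^[j] f) (deriv^[j] h) (Ioi 0) := by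
  induction j with
  | zero => intro f h e; exact e
  | succ j ih => intro f h e; exact ih (deriv_eqOn e)

lemma iter_theta (j : ℕ) : ∀ {k : ℕ} {f : ℝ → ℂ}, Good (k + j + 1) f →
    EqOn (deriv^[j] (fun τ : ℝ => 1 * ((τ : ℂ) * deriv f τ) + (-(j : ℂ)) * f τ))
      (fun τ : ℝ => (τ : ℂ) * deriv^[j + 1] f τ) (Ioi 0) := by
  induction j with
  | zero => intro k f H x hx; simp
  | succ j ih =>
    intro k f H
    have H2 : Good (k + j + 1) (deriv f) := H.2.2
    have e := ih H2
    have e2 : EqOn (deriv (fun τ : ℝ => 1 * ((τ : ℂ) * deriv f τ) + (-((j + 1 : ℕ) : ℂ)) * f τ))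
        (fun τ => 1 * ((τ : ℂ) * deriv (deriv f) τ) + (-(j : ℂ)) * deriv f τ) (Ioi 0) := by
      intro x hx
      have := ((hasDerivAt_tmul H2.1 hx).const_mul 1).add
        ((dAt H.1 hx).hasDerivAt.const_mul (-((j + 1 : ℕ) : ℂ)))
      refine this.deriv.trans ?_
      push_cast; ring
    exact (iter_congr j e2).trans e

lemma falling (j : ℕ) : ∀ {k : ℕ} {f : ℝ → ℂ}, Good (k + j) f →
    EqOn (opProdC ((List.range j).map (fun l : ℕ => ((1 : ℂ), -(l : ℂ)))) f)
      (fun τ => (τ : ℂ) ^ j * deriv^[j] f τ) (Ioi 0) := by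
  induction j with
  | zero => intro k f H x hx; simp [opProdC]
  | succ j ih =>
    intro k f H
    rw [List.range_succ, List.map_append, opProdC_append]
    have H' : Good (k + j) (opProdC (List.map (fun l : ℕ => ((1 : ℂ), -(l : ℂ))) [j]) f) :=
      Good.opProd _ H
    intro x hx
    rw [ih H' hx]
    have := iter_theta j (f := f) (k := k) H hx
    simp only [List.map_cons, List.map_nil, opProdC_cons] at this ⊢
    simp only [opProdC, List.foldr_nil]
    rw [this, pow_succ]; ring

lemma hasDerivAt_cpow (r : ℕ) (x : ℝ) :
    HasDerivAt (fun τ : ℝ => (τ : ℂ) ^ r) (r * (x : ℂ) ^ (r - 1)) x := by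
  have h := (hasDerivAt_cast x).pow r
  rw [mul_one] at h
  exact h

lemma cd_of_good {k : ℕ} : ∀ {f : ℝ → ℂ}, Good k f → ContDiffOn ℝ k f (Ioi 0) := by
  induction k with
  | zero => intro f H; exact contDiffOn_zero.2 H.1
  | succ k ih =>
    intro f H
    push_cast
    rw [contDiffOn_succ_iff_deriv_of_isOpen isOpen_Ioi]
    exact ⟨H.1, by simp, ih H.2.2⟩

lemma cd_opProd (L : List (ℂ × ℂ)) : ∀ {k : ℕ} {f : ℝ → ℂ}, ContDiffOn ℝ ((k + L.length : ℕ)) f (Ioi 0) →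
    ContDiffOn ℝ k (opProdC L f) (Ioi 0) := by
  induction L with
  | nil => intro k f H; exact H
  | cons p L ih =>
    intro k f H
    have h1 := ih (k := k + 1) (f := f) (by convert H using 2; simp; omega)
    have h2 := h1
    push_cast at h2
    rw [contDiffOn_succ_iff_deriv_of_isOpen isOpen_Ioi] at h2
    have h3 : ContDiffOn ℝ k (opProdC L f) (Ioi 0) := h1.of_le (by exact_mod_cast Nat.le_succ k)
    exact (contDiffOn_const.mul (Complex.ofRealCLM.contDiff.contDiffOn.mul h2.2.2)).add
      (contDiffOn_const.mul h3)

lemma diff_opProd {L : List (ℂ × ℂ)} {f : ℝ → ℂ} (H : ContDiffOn ℝ ((L.length + 1 : ℕ)) f (Ioi 0)) :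
    DifferentiableOn ℝ (opProdC L f) (Ioi 0) :=
  (cd_opProd L (k := 1) (by convert H using 2; omega)).differentiableOn (by simp)

lemma shift (r : ℕ) (L : List (ℂ × ℂ)) {f : ℝ → ℂ} (H : ContDiffOn ℝ (L.length : ℕ) f (Ioi 0)) :
    EqOn (opProdC L (fun τ => (τ : ℂ) ^ r * f τ))
      (fun τ => (τ : ℂ) ^ r * opProdC (L.map (fun p => (p.1, p.2 + p.1 * r))) f τ) (Ioi 0) := by
  induction L with
  | nil => intro x hx; rfl
  | cons p L ih =>
    have e := ih (H.of_le (by simp))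
    intro x hx
    have hd : DifferentiableOn ℝ (opProdC (L.map (fun p => (p.1, p.2 + p.1 * r))) f) (Ioi 0) :=
      diff_opProd (by simpa using H)
    have hder := ((hasDerivAt_cpow r x).mul (dAt hd hx).hasDerivAt).deriv
    simp only [opProdC_cons, List.map_cons]
    rw [e hx, deriv_eqOn e hx]
    have h' : deriv (fun τ : ℝ => (τ : ℂ) ^ r * opProdC (L.map (fun p => (p.1, p.2 + p.1 * r))) f τ) x = _ := hder
    rw [h']
    rcases r with _ | r
    · simp
    · simp only [Nat.add_sub_cancel]
      rw [pow_succ]; ring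

lemma chvar (s : ℝ) (L : List (ℂ × ℂ)) {f : ℝ → ℂ} (H : ContDiffOn ℝ (L.length : ℕ) f (Ioi 0)) :
    EqOn (opProdC L (fun q => f (q ^ s)))
      (fun q => opProdC (L.map (fun p => (p.1 * s, p.2))) f (q ^ s)) (Ioi 0) := by
  induction L with
  | nil => intro x hx; rfl
  | cons p L ih =>
    have e := ih (H.of_le (by simp))
    intro x hx
    have hx' : (0:ℝ) < x := hx
    have hd : DifferentiableOn ℝ (opProdC (L.map (fun p => (p.1 * (s : ℂ), p.2))) f) (Ioi 0) :=
      diff_opProd (by simpa using H)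
    have hxs : x ^ s ∈ Ioi (0:ℝ) := Real.rpow_pos_of_pos hx' s
    have hder := ((dAt hd hxs).hasDerivAt.scomp x (Real.hasDerivAt_rpow_const (p := s) (Or.inl hx'.ne'))).deriv
    simp only [opProdC_cons, List.map_cons]
    rw [e hx, deriv_eqOn e hx]
    have h' : deriv (fun q : ℝ => opProdC (L.map (fun p => (p.1 * (s : ℂ), p.2))) f (q ^ s)) x = _ := hder
    rw [h', Complex.real_smul]
    have h2 : x * (s * x ^ (s - 1)) = s * x ^ s := by
      rw [Real.rpow_sub_one hx'.ne']; field_simp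
    have h3 : (x : ℂ) * ((s * x ^ (s - 1) : ℝ) : ℂ) = s * ((x ^ s : ℝ) : ℂ) := by exact_mod_cast h2
    rw [← mul_assoc (x : ℂ), h3]; ring

/-! Laplace transforms -/

noncomputable def La (h : ℝ → ℂ) (u : ℝ) : ℂ :=
  ∫ τ in Ioi (0 : ℝ), Complex.exp (-(u : ℂ) * (τ : ℂ)) * h τ

lemma norm_e (u τ : ℝ) : ‖Complex.exp (-(u : ℂ) * (τ : ℂ))‖ = Real.exp (-u * τ) := by
  rw [Complex.norm_exp]; simp

lemma kernel_cont (u : ℝ) : Continuous (fun τ : ℝ => Complex.exp (-(u : ℂ) * (τ : ℂ))) := by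
  fun_prop

lemma meas {h : ℝ → ℂ} (hc : ContinuousOn h (Ioi 0)) (u : ℝ) :
    AEStronglyMeasurable (fun τ : ℝ => Complex.exp (-(u : ℂ) * (τ : ℂ)) * h τ) (volume.restrict (Ioi 0)) :=
  ((kernel_cont u).continuousOn.mul hc).aestronglyMeasurable measurableSet_Ioi

lemma bnd {h : ℝ → ℂ} (hp : PB h) {u : ℝ} (hu : 0 < u) : ∃ C, ∀ τ : ℝ, 0 < τ → ∀ v : ℝ, u ≤ v →
    ‖Complex.exp (-(v : ℂ) * (τ : ℂ)) * h τ‖ ≤ C * Real.exp (-(u / 2) * τ) := by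
  obtain ⟨C, hC⟩ := hp (u / 2) (by positivity)
  refine ⟨C, fun τ hτ v hv => ?_⟩
  rw [norm_mul, norm_e]
  calc _ ≤ Real.exp (-u * τ) * (C * Real.exp (u / 2 * τ)) := by
        refine mul_le_mul (Real.exp_le_exp.2 ?_) (hC τ hτ) (norm_nonneg _) (Real.exp_pos _).le
        nlinarith
    _ = C * (Real.exp (-u * τ) * Real.exp (u / 2 * τ)) := by ring
    _ = _ := by rw [← Real.exp_add]; ring_nf

lemma bint (C : ℝ) {u : ℝ} (hu : 0 < u) :
    IntegrableOn (fun τ : ℝ => C * Real.exp (-(u / 2) * τ)) (Ioi 0) :=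
  (exp_neg_integrableOn_Ioi 0 (half_pos hu)).const_mul C

lemma integ {h : ℝ → ℂ} (hc : ContinuousOn h (Ioi 0)) (hp : PB h) {u : ℝ} (hu : 0 < u) :
    IntegrableOn (fun τ : ℝ => Complex.exp (-(u : ℂ) * (τ : ℂ)) * h τ) (Ioi 0) := by
  obtain ⟨C, hC⟩ := bnd hp hu
  refine Integrable.mono' (bint C hu) (meas hc u) ?_
  filter_upwards [ae_restrict_mem measurableSet_Ioi] with τ hτ using hC τ hτ u le_rfl

lemma La_hasDeriv {h : ℝ → ℂ} (hc : ContinuousOn h (Ioi 0)) (hp : PB h) {u : ℝ} (hu : 0 < u) :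
    HasDerivAt (La h) (-La (fun τ => (τ : ℂ) * h τ) u) u := by
  obtain ⟨C, hC⟩ := bnd hp.tmul (half_pos hu)
  have hc' : ContinuousOn (fun τ : ℝ => (τ : ℂ) * h τ) (Ioi 0) := Complex.continuous_ofReal.continuousOn.mul hc
  have := hasDerivAt_integral_of_dominated_loc_of_deriv_le (𝕜 := ℝ) (μ := volume.restrict (Ioi (0:ℝ)))
    (F := fun v τ => Complex.exp (-(v : ℂ) * (τ : ℂ)) * h τ)
    (F' := fun v τ => -(Complex.exp (-(v : ℂ) * (τ : ℂ)) * ((τ : ℂ) * h τ)))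
    (x₀ := u) (s := Ioi (u / 2)) (bound := fun τ => C * Real.exp (-(u / 2 / 2) * τ))
    (Ioi_mem_nhds (by linarith)) (Eventually.of_forall fun v => meas hc v) (integ hc hp hu)
    (meas hc' u).neg ?_ (bint C (half_pos hu)) ?_
  · have h2 := this.2
    rw [integral_neg] at h2
    exact h2
  · filter_upwards [ae_restrict_mem measurableSet_Ioi] with τ hτ v hv
    rw [norm_neg]
    exact hC τ hτ v (le_of_lt hv)
  · refine Eventually.of_forall fun τ v _ => ?_
    have h1 : HasDerivAt (fun v : ℝ => -(v : ℂ) * (τ : ℂ)) (-1 * τ) v :=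
      (hasDerivAt_cast v).neg.mul_const _
    have h2 := h1.cexp.mul_const (h τ)
    refine h2.congr_deriv ?_
    ring

lemma La_smooth (k : ℕ) : ∀ {h : ℝ → ℂ}, ContinuousOn h (Ioi 0) → PB h → ContDiffOn ℝ k (La h) (Ioi 0) := by
  induction k with
  | zero =>
    intro h hc hp
    exact contDiffOn_zero.2 fun u hu => (La_hasDeriv hc hp hu).continuousAt.continuousWithinAt
  | succ k ih =>
    intro h hc hp
    push_cast
    rw [contDiffOn_succ_iff_deriv_of_isOpen isOpen_Ioi]
    refine ⟨fun u hu => (La_hasDeriv hc hp hu).differentiableAt.differentiableWithinAt, by simp, ?_⟩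
    have := (ih (Complex.continuous_ofReal.continuousOn.mul hc) hp.tmul).neg
    exact this.congr fun u hu => (La_hasDeriv hc hp hu).deriv

lemma La_deriv {h : ℝ → ℂ} (H : Good 1 h) (h0 : Tendsto h (𝓝[>] 0) (𝓝 0)) {u : ℝ} (hu : 0 < u) :
    La (deriv h) u = u * La h u := by
  have key := MeasureTheory.integral_Ioi_mul_deriv_eq_deriv_mul (a := 0) (a' := (0:ℂ)) (b' := (0:ℂ))
    (u := fun τ : ℝ => Complex.exp (-(u : ℂ) * (τ : ℂ))) (v := h)
    (u' := fun τ : ℝ => Complex.exp (-(u : ℂ) * (τ : ℂ)) * (-(u : ℂ))) (v' := deriv h)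
    ?_ ?_ ?_ ?_ ?_ ?_
  · unfold La
    rw [key, ← integral_const_mul]
    rw [sub_zero, zero_sub, ← integral_neg]
    congr 1; ext τ; ring
  · intro τ _
    have h1 : HasDerivAt (fun v : ℝ => -(u : ℂ) * (v : ℂ)) (-(u : ℂ) * 1) τ :=
      (hasDerivAt_cast τ).const_mul _
    simpa using h1.cexp
  · intro τ hτ; exact (dAt H.1 hτ).hasDerivAt
  · exact integ H.2.2.1 H.2.2.2 hu
  · have := (integ H.base.1 H.base.2 hu).const_mul (-(u : ℂ))
    refine this.congr (Eventually.of_forall fun τ => ?_)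
    simp only [Pi.mul_apply]; ring
  · have h1 : Tendsto (fun τ : ℝ => Complex.exp (-(u : ℂ) * (τ : ℂ))) (𝓝[>] 0) (𝓝 (Complex.exp (-(u : ℂ) * ((0:ℝ) : ℂ)))) :=
      ((kernel_cont u).tendsto 0).mono_left nhdsWithin_le_nhds
    have h2 := h1.mul h0
    rw [mul_zero] at h2
    exact h2
  · obtain ⟨C, hC⟩ := bnd H.base.2 hu
    refine squeeze_zero_norm' (a := fun τ => C * Real.exp (-(u / 2) * τ)) ?_ ?_
    · filter_upwards [eventually_gt_atTop 0] with τ hτ using hC τ hτ u le_rfl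
    · have h1 : Tendsto (fun τ : ℝ => Real.exp (-(u / 2) * τ)) atTop (𝓝 0) := by
        refine Real.tendsto_exp_atBot.comp ?_
        exact tendsto_id.const_mul_atTop_of_neg (by linarith)
      simpa using h1.const_mul C

lemma La_add {f h : ℝ → ℂ} (Hf : Good 0 f) (Hh : Good 0 h) {u : ℝ} (hu : 0 < u) :
    La (fun τ => f τ + h τ) u = La f u + La h u := by
  unfold La
  rw [← integral_add (integ Hf.1 Hf.2 hu) (integ Hh.1 Hh.2 hu)]
  congr 1; ext τ; ring

lemma La_cmul (c : ℂ) (f : ℝ → ℂ) (u : ℝ) : La (fun τ => c * f τ) u = c * La f u := by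
  unfold La
  rw [← integral_const_mul]
  congr 1; ext τ; ring

lemma La_congr {f h : ℝ → ℂ} (e : EqOn f h (Ioi 0)) (u : ℝ) : La f u = La h u :=
  setIntegral_congr_fun measurableSet_Ioi fun τ hτ => by simp only [e hτ]

lemma tmul_tendsto {h : ℝ → ℂ} (hp : PB h) : Tendsto (fun τ : ℝ => (τ : ℂ) * h τ) (𝓝[>] 0) (𝓝 0) := by
  obtain ⟨C, hC⟩ := hp 1 one_pos
  refine squeeze_zero_norm' (a := fun τ => τ * (C * Real.exp (1 * τ))) ?_ ?_
  · filter_upwards [self_mem_nhdsWithin] with τ hτ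
    have hτ' : (0:ℝ) < τ := hτ
    rw [norm_mul, Complex.norm_real, Real.norm_of_nonneg hτ'.le]
    exact mul_le_mul_of_nonneg_left (hC τ hτ) hτ'.le
  · have : Continuous (fun τ : ℝ => τ * (C * Real.exp (1 * τ))) := by fun_prop
    have h2 := (this.tendsto 0).mono_left (nhdsWithin_le_nhds (s := Ioi 0))
    simpa using h2

/-- u times Laplace -/
noncomputable def Lp (h : ℝ → ℂ) (u : ℝ) : ℂ := u * La h u

lemma Lp_smooth (k : ℕ) {h : ℝ → ℂ} (H : Good 0 h) : ContDiffOn ℝ k (Lp h) (Ioi 0) :=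
  Complex.ofRealCLM.contDiff.contDiffOn.mul (La_smooth k H.1 H.2)

lemma Lp_theta {h : ℝ → ℂ} (H : Good 1 h) {u : ℝ} (hu : 0 < u) :
    Lp (fun τ => (τ : ℂ) * deriv h τ) u = - (u * deriv (Lp h) u) := by
  have h1 := La_deriv (h := fun τ => (τ : ℂ) * h τ) H.tmul (tmul_tendsto H.2.1) hu
  rw [La_congr (fun τ hτ => (hasDerivAt_tmul H.1 hτ).deriv), La_add H.pred H.2.2.tmul hu] at h1
  have h2 := ((hasDerivAt_cast u).mul (La_hasDeriv H.base.1 H.base.2 hu)).deriv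
  have h3 : deriv (Lp h) u = _ := h2
  rw [h3]
  unfold Lp
  linear_combination (u : ℂ) * h1

lemma Lp_opProd (L : List (ℂ × ℂ)) {f : ℝ → ℂ} (H : Good L.length f) :
    EqOn (Lp (opProdC L f)) (opProdC (L.map (fun p => (-p.1, p.2))) (Lp f)) (Ioi 0) := by
  induction L with
  | nil => intro x hx; rfl
  | cons p L ih =>
    have e := ih H.pred
    intro u hu
    have H1 : Good 1 (opProdC L f) := Good.opProd L (by convert H using 1; simp; omega)
    simp only [opProdC_cons, List.map_cons]
    rw [← e hu, ← deriv_eqOn e hu]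
    have h1 := Lp_theta H1 hu
    unfold Lp at h1 ⊢
    rw [La_add (H1.2.2.tmul.cmul p.1) (H1.pred.cmul p.2) hu, La_cmul, La_cmul]
    linear_combination p.1 * h1

lemma Lp_iter (r : ℕ) {f : ℝ → ℂ} (H : Good r f) 
    (h0 : ∀ j < r, Tendsto (deriv^[j] f) (𝓝[>] 0) (𝓝 0)) :
    EqOn (Lp (deriv^[r] f)) (fun u => (u : ℂ) ^ r * Lp f u) (Ioi 0) := by
  induction r with
  | zero => intro u hu; simp
  | succ r ih =>
    intro u hu
    have e := ih H.pred (fun j hj => h0 j (by omega)) hu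
    have H1 : Good 1 (deriv^[r] f) := Good.iter r (by convert H using 1; omega)
    have h1 := La_deriv H1 (h0 r (by omega)) hu
    rw [Function.iterate_succ_apply']
    unfold Lp at e ⊢
    simp only at e ⊢
    rw [h1, pow_succ]
    linear_combination (u : ℂ) * e

lemma castList (L : List ℕ) : (do let a ← L; pure (a : ℂ)) = L.map (fun a : ℕ => (a : ℂ)) := by
  induction L with
  | nil => rfl
  | cons x L ih =>
    simp only [List.bind_eq_flatMap, List.pure_def] at ih
    simp [ih]

end S14
/-- Corollary 5.7 of the paper.  Setup as in Statement 12.  If `g` is a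
solution of the regularized Picard–Fuchs equation with vanishing derivatives at `0⁺` and
polynomial growth, `F(u) = u·∫₀^∞ e^{−uτ} g(τ) dτ`, and `G(q) = F(q^{1/r})`, then `G` is
smooth on `(0,∞)` and satisfies the Picard–Fuchs equation of the blowup at `z = 1`:
`[∏_j ∏_{l<c_j}(c_j·θ_q − l − a^j)] G = q·[∏_{l<d}(−d·θ_q − dλ − l)] G`. -/
theorem stmt_14 (N : ℕ) (hN : 1 ≤ N) (c : Fin N → ℕ) (d r : ℕ)
    (hc : ∀ j, 0 < c j) (hd : 0 < d) (hdvd : ∀ j, c j ∣ d)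
    (hr : 0 < r) (hrsum : (∑ j, c j) = d + r)
    (a : Fin N → ℚ) (ha : ∀ j, 0 ≤ a j)
    (lam : ℂ) (n : ℕ) (hn : n = ∑ j, c j)
    (g : ℝ → ℂ)
    (hg_smooth : ContDiffOn ℝ (n : ℕ∞) g (Set.Ioi 0))
    (hode : ∀ τ : ℝ, 0 < τ →
      (τ : ℂ) ^ (r : ℕ) *
        opProdC (((List.finRange N).map (fun j => (List.range (c j)).map
            (fun l => (-(c j : ℂ) / (r : ℂ), -(l : ℂ) - (a j : ℂ))))).flatten) g τ =
      opProdC ((List.range d).map (fun l => ((d : ℂ) / (r : ℂ), -(d : ℂ) * lam - (l : ℂ))))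
        (opProdC ((List.range r).map (fun l => ((1 : ℂ), -(l : ℂ)))) g) τ)
    (hg0 : ∀ j ≤ n, Filter.Tendsto (deriv^[j] g) (nhdsWithin 0 (Set.Ioi 0)) (nhds 0))
    (hpoly : ∃ C p : ℝ, ∀ τ : ℝ, 0 < τ → ∀ j ≤ n, ‖deriv^[j] g τ‖ ≤ C * (1 + τ) ^ p)
    (F G : ℝ → ℂ)
    (hF : ∀ u : ℝ, 0 < u →
      F u = (u : ℂ) * ∫ τ in Set.Ioi (0 : ℝ), Complex.exp (-(u : ℂ) * (τ : ℂ)) * g τ)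
    (hG : ∀ q : ℝ, 0 < q → G q = F (q ^ ((1 : ℝ) / (r : ℝ)))) :
    (∀ u : ℝ, 0 < u →
      IntegrableOn (fun τ : ℝ => Complex.exp (-(u : ℂ) * (τ : ℂ)) * g τ) (Set.Ioi 0)) ∧
    ContDiffOn ℝ (⊤ : ℕ∞) G (Set.Ioi 0) ∧
    ∀ q : ℝ, 0 < q →
      opProdC (((List.finRange N).map (fun j => (List.range (c j)).map
          (fun l => ((c j : ℂ), -(l : ℂ) - (a j : ℂ))))).flatten) G q =
        (q : ℂ) *
          opProdC ((List.range d).map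
            (fun l => (-(d : ℂ), -(d : ℂ) * lam - (l : ℂ)))) G q := by
  simp only [S14.castList, List.map_map, Function.comp_def] at hode ⊢
  have hPB : ∀ j ≤ n, S14.PB (deriv^[j] g) := by
    obtain ⟨C, p, h⟩ := hpoly
    exact fun j hj => S14.PB.of_poly fun τ hτ => h τ hτ j hj
  have hgood : S14.Good n g := S14.Good.of_cd hg_smooth hPB
  have hnd : n = d + r := hn.trans hrsum
  have hgood0 : S14.Good 0 g := hgood.base
  have hFL : Set.EqOn G (fun q => S14.Lp g (q ^ ((1 : ℝ) / (r : ℝ)))) (Set.Ioi 0) := by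
    intro q hq
    have hq' : (0:ℝ) < q := hq
    rw [hG q hq, hF _ (Real.rpow_pos_of_pos hq' _)]
    rfl
  have hsm : ∀ k : ℕ, ContDiffOn ℝ k (S14.Lp g) (Set.Ioi 0) := fun k => S14.Lp_smooth k hgood0
  refine ⟨fun u hu => S14.integ hgood0.1 hgood0.2 hu, ?_, ?_⟩
  · refine ContDiffOn.congr ?_ hFL
    have h1 : ContDiffOn ℝ (⊤ : ℕ∞) (S14.Lp g) (Set.Ioi 0) := contDiffOn_infty.2 hsm
    refine h1.comp (t := Set.Ioi 0) (f := fun q : ℝ => q ^ ((1 : ℝ) / (r : ℝ))) ?_ ?_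
    · intro q hq
      have hq' : (0:ℝ) < q := hq
      exact (Real.contDiffAt_rpow_const_of_ne hq'.ne').contDiffWithinAt
    · intro q hq
      exact Real.rpow_pos_of_pos hq _
  · have hr0 : (r : ℂ) ≠ 0 := by exact_mod_cast hr.ne'
    set A := ((List.finRange N).map (fun j => (List.range (c j)).map
            (fun l : ℕ => (-(c j : ℂ) / (r : ℂ), -(l : ℂ) - (a j : ℂ))))).flatten with hA
    set B := (List.range d).map (fun l : ℕ => ((d : ℂ) / (r : ℂ), -(d : ℂ) * lam - (l : ℂ))) with hB
    have hAlen : A.length = n := by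
      rw [hA, hn, List.length_flatten, List.map_map, Fin.sum_univ_def]
      congr 1
      refine List.map_congr_left fun j _ => ?_
      simp
    have hBlen : B.length = d := by simp [hB]
    have hgr : S14.Good d (deriv^[r] g) := S14.Good.iter r (hnd ▸ hgood)
    have hfall := S14.falling r (k := d) (f := g) (hnd ▸ hgood)
    have hsh := S14.shift r B (f := deriv^[r] g) (by rw [hBlen]; exact S14.cd_of_good hgr)
    have eqA : Set.EqOn (opProdC A g)
        (opProdC (B.map (fun p => (p.1, p.2 + p.1 * r))) (deriv^[r] g)) (Set.Ioi 0) := by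
      intro τ hτ
      have hτ' : (0:ℝ) < τ := hτ
      have h1 := hode τ hτ
      rw [S14.opProdC_congr B hfall hτ, hsh hτ] at h1
      have : (τ : ℂ) ^ r ≠ 0 := pow_ne_zero _ (by exact_mod_cast hτ'.ne')
      exact mul_left_cancel₀ this h1
    intro q hq
    set u : ℝ := q ^ ((1 : ℝ) / (r : ℝ)) with hu
    have hupos : u ∈ Set.Ioi (0:ℝ) := Real.rpow_pos_of_pos hq _
    have hur : (u : ℂ) ^ r = (q : ℂ) := by
      have : u ^ r = q := by
        rw [hu, one_div]; exact Real.rpow_inv_natCast_pow hq.le hr.ne'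
      exact_mod_cast this
    have e1 := S14.Lp_opProd A (f := g) (by rw [hAlen]; exact hgood) hupos
    have e2 := S14.Lp_opProd (B.map (fun p => (p.1, p.2 + p.1 * r))) (f := deriv^[r] g)
      (by simpa [hBlen] using hgr) hupos
    have hgood_r : S14.Good r g := by
      have : ∀ k, S14.Good (r + k) g → S14.Good r g := by
        intro k
        induction k with
        | zero => exact fun h => h
        | succ k ih => exact fun h => ih h.pred
      exact this d (by rw [add_comm, ← hnd]; exact hgood)
    have e3 := S14.Lp_iter r hgood_r (fun j hj => hg0 j (by omega))
    have e4 : S14.Lp (opProdC A g) u = S14.Lp (opProdC (B.map (fun p => (p.1, p.2 + p.1 * r))) (deriv^[r] g)) u := by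
      unfold S14.Lp
      rw [S14.La_congr eqA]
    have e5 := S14.shift r ((B.map (fun p => (p.1, p.2 + p.1 * (r : ℂ)))).map (fun p => (-p.1, p.2)))
      (hsm _) hupos
    rw [e1, e2, S14.opProdC_congr _ e3 hupos, e5] at e4
    rw [S14.opProdC_congr _ hFL hq, S14.opProdC_congr _ hFL hq, S14.chvar _ _ (hsm _) hq,
      S14.chvar _ _ (hsm _) hq]
    simp only [hur] at e4
    beta_reduce
    rw [← hu]
    convert e4 using 2
    · rw [hA, List.map_flatten, List.map_flatten, List.map_map, List.map_map]
      congr 2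
      funext j
      simp only [Function.comp, List.map_map]
      refine List.map_congr_left fun l _ => ?_
      simp only [Function.comp, Prod.mk.injEq, and_true]
      push_cast
      ring
    · rw [hB]
      simp only [List.map_map]
      congr 1
      refine List.map_congr_left fun l _ => ?_
      simp only [Function.comp, Prod.mk.injEq]
      constructor
      · push_cast; ring
      · ring
end

section
/- For every real τ with 0 < τ < R, the series Σ_{k₀≥0} |B_{k₀}| · τ^{r(k₀+1)/d} converges. In particular, the regularized FJRW I-function I^{(W,G),reg}(τ) = Σ_{k₀≥0} B_{k₀} τ^{r(k₀+1)/d} converges absolutely on (0, R), so it has a positive finite radius of convergence at least R. -/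
open Filter Topology in
theorem aux_summable (d : ℕ) (hd : 0 < d) (u ρ : ℕ → ℝ) (hu : ∀ k, 0 ≤ u k)
    (h : ∀ k, u (k + d) = ρ k * u k) (L : ℝ) (hL : L < 1) (hρ : Tendsto ρ atTop (𝓝 L)) :
    Summable u := by
  have : NeZero d := ⟨hd.ne'⟩
  obtain ⟨l, hl1, hl2⟩ := exists_between hL
  have hev : ∀ᶠ k in atTop, ρ k < l := hρ.eventually_lt_const hl1
  have key : ∀ i : Fin d, Summable (fun k : ℕ => u (k * d + i)) := by
    intro i
    refine summable_of_ratio_norm_eventually_le (r := l) hl2 ?_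
    have ht : Tendsto (fun k : ℕ => k * d + (i : ℕ)) atTop atTop := by
      refine tendsto_atTop_mono (fun k => ?_) tendsto_id
      simp only [id]
      nlinarith
    filter_upwards [ht.eventually hev] with k hk
    rw [Real.norm_of_nonneg (hu _), Real.norm_of_nonneg (hu _)]
    have : (k + 1) * d + (i : ℕ) = (k * d + i) + d := by ring
    rw [this, h]
    exact mul_le_mul_of_nonneg_right hk.le (hu _)
  rw [← (Nat.divModEquiv d).symm.summable_iff, ← (Equiv.prodComm (Fin d) ℕ).summable_iff]
  refine (summable_prod_of_nonneg (fun _ => hu _)).2 ⟨fun i => ?_, (hasSum_fintype _).summable⟩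
  have := key i
  simpa [Nat.divModEquiv, Function.comp_def, mul_comm, add_comm] using this

theorem aux_inv (y : ℝ) (n : ℕ) :
    (Real.Gamma y)⁻¹ = (∏ i ∈ Finset.range n, (y + i)) * (Real.Gamma (y + n))⁻¹ := by
  induction n with
  | zero => simp
  | succ n ih =>
    rw [ih, Finset.prod_range_succ]
    have : (Real.Gamma (y + n))⁻¹ = (y + n) * (Real.Gamma (y + n + 1))⁻¹ := by
      by_cases h : y + n = 0
      · simp [h]
      · rw [Real.Gamma_add_one h]
        rw [mul_inv, ← mul_assoc, mul_inv_cancel₀ h, one_mul]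
    rw [this]
    push_cast
    rw [add_assoc y, mul_assoc]

open Filter Topology in
theorem aux_lim (a b : ℝ) (ha : 0 ≤ a) :
    Tendsto (fun k : ℕ => |a * ((k : ℝ) + 1) + b| / ((k : ℝ) + 1)) atTop (𝓝 a) := by
  have h1 : Tendsto (fun k : ℕ => |a + b * (1 / ((k : ℝ) + 1))|) atTop (𝓝 |a + b * 0|) :=
    ((tendsto_one_div_add_atTop_nhds_zero_nat.const_mul b).const_add a).abs
  rw [mul_zero, add_zero, abs_of_nonneg ha] at h1
  refine h1.congr fun k => ?_
  have hk : (0 : ℝ) < (k : ℝ) + 1 := by positivity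
  rw [← abs_of_pos hk, ← abs_div, abs_of_pos hk]
  congr 1
  field_simp


/-- Setup: `N ≥ 1`, positive integers `c_j ∣ d`, `r = Σ c_j − d > 0`,
integers `0 ≤ f_j < d/c_j` with multiplicities `m_j = f_j·c_j/d`.  With (Mathlib's `Γ`
vanishing at the nonpositive integers and division by `0` giving `0`, encoding the vanishing
at non-narrow sectors)
`B_{k₀} = [(−1)^{k₀+1}/(Γ(1+(r/d)(k₀+1))·k₀!)]·∏_j Γ(1−⟨(k₀+1)q_j+m_j⟩)/Γ(1−(k₀+1)q_j−m_j)`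
and `R = (r^r·d^d·∏_j c_j^{−c_j})^{1/r}`, for every `0 < τ < R` the series
`Σ_{k₀≥0} |B_{k₀}|·τ^{r(k₀+1)/d}` converges; in particular the regularized FJRW
`I`-function `I^{(W,G),reg}(τ) = Σ_{k₀} B_{k₀} τ^{r(k₀+1)/d}` converges absolutely on
`(0, R)`. -/
theorem stmt_16 (N : ℕ) (hN : 1 ≤ N) (c : Fin N → ℕ) (d r : ℕ)
    (hc : ∀ j, 0 < c j) (hd : 0 < d) (hdvd : ∀ j, c j ∣ d)
    (hr : 0 < r) (hrsum : (∑ j, c j) = d + r)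
    (f : Fin N → ℕ) (hf : ∀ j, f j < d / c j)
    (m : Fin N → ℝ) (hm : ∀ j, m j = (f j : ℝ) * (c j : ℝ) / (d : ℝ))
    (B : ℕ → ℝ)
    (hB : ∀ k₀ : ℕ, B k₀ =
      ((-1 : ℝ) ^ (k₀ + 1) /
          (Real.Gamma (1 + ((r : ℝ) / (d : ℝ)) * ((k₀ : ℝ) + 1)) * (k₀.factorial : ℝ))) *
        ∏ j, Real.Gamma (1 -
              Int.fract (((k₀ : ℝ) + 1) * ((c j : ℝ) / (d : ℝ)) + m j)) /
          Real.Gamma (1 - ((k₀ : ℝ) + 1) * ((c j : ℝ) / (d : ℝ)) - m j))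
    (R : ℝ)
    (hR : R = ((r : ℝ) ^ (r : ℝ) * (d : ℝ) ^ (d : ℝ) *
      ∏ j, (c j : ℝ) ^ (-(c j : ℝ))) ^ ((1 : ℝ) / (r : ℝ)))
    (τ : ℝ) (hτ0 : 0 < τ) (hτR : τ < R) :
    Summable (fun k₀ : ℕ => |B k₀| * τ ^ ((r : ℝ) * ((k₀ : ℝ) + 1) / (d : ℝ))) ∧
    Summable (fun k₀ : ℕ => |B k₀ * τ ^ ((r : ℝ) * ((k₀ : ℝ) + 1) / (d : ℝ))|) := by
  have hdR : (0 : ℝ) < d := by exact_mod_cast hd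
  have hrR : (0 : ℝ) < r := by exact_mod_cast hr
  have hcR : ∀ j, (0 : ℝ) < c j := fun j => by exact_mod_cast hc j
  have main : Summable (fun k₀ : ℕ => |B k₀| * τ ^ ((r : ℝ) * ((k₀ : ℝ) + 1) / (d : ℝ))) := by
    set P : ℕ → ℝ := fun k => ∏ j, ∏ i ∈ Finset.range (c j),
      |(c j / d : ℝ) * ((k : ℝ) + 1) + (m j + c j - 1 - i)| with hP
    set Q : ℕ → ℝ := fun k => ∏ i ∈ Finset.range r, |(r / d : ℝ) * ((k : ℝ) + 1) + (1 + i)| with hQ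
    set S : ℕ → ℝ := fun k => ∏ i ∈ Finset.range d, |(1 : ℝ) * ((k : ℝ) + 1) + i| with hS
    refine aux_summable d hd _ (fun k => τ ^ r * (P k / (Q k * S k))) (fun k => by positivity) ?_
      (τ ^ r * ((∏ j, (c j / d : ℝ) ^ c j) / ((r / d : ℝ) ^ r * 1 ^ d))) ?_ ?_
    · intro k
      have hτ : τ ^ ((r : ℝ) * (((k + d : ℕ) : ℝ) + 1) / (d : ℝ))
          = τ ^ r * τ ^ ((r : ℝ) * ((k : ℝ) + 1) / (d : ℝ)) := by
        rw [← Real.rpow_natCast τ r, ← Real.rpow_add hτ0]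
        congr 1
        push_cast
        field_simp
        ring
      have hQpos : 0 < Q k := Finset.prod_pos fun i _ => abs_pos.2 (by positivity)
      have hSpos : 0 < S k := Finset.prod_pos fun i _ => abs_pos.2 (by positivity)
      have h1 : |(Real.Gamma (1 + ((r : ℝ) / d) * (((k + d : ℕ) : ℝ) + 1)))⁻¹|
          = (Q k)⁻¹ * |(Real.Gamma (1 + ((r : ℝ) / d) * ((k : ℝ) + 1)))⁻¹| := by
        rw [aux_inv (1 + ((r : ℝ) / d) * ((k : ℝ) + 1)) r, abs_mul, Finset.abs_prod]
        have e1 : ∏ i ∈ Finset.range r, |1 + ((r : ℝ) / d) * ((k : ℝ) + 1) + i| = Q k := by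
          refine Finset.prod_congr rfl fun i _ => ?_
          congr 1; ring
        have e2 : 1 + ((r : ℝ) / d) * (((k + d : ℕ) : ℝ) + 1)
          = 1 + ((r : ℝ) / d) * ((k : ℝ) + 1) + r := by
          push_cast; field_simp; ring
        rw [e1, e2, inv_mul_cancel_left₀ hQpos.ne']
      have h2 : |(((k + d).factorial : ℝ))⁻¹| = (S k)⁻¹ * |((k.factorial : ℝ))⁻¹| := by
        rw [← Real.Gamma_nat_eq_factorial, ← Real.Gamma_nat_eq_factorial]
        rw [aux_inv ((k : ℝ) + 1) d, abs_mul, Finset.abs_prod]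
        have e1 : ∏ i ∈ Finset.range d, |(k : ℝ) + 1 + i| = S k := by
          refine Finset.prod_congr rfl fun i _ => ?_
          congr 1; ring
        have e2 : (((k + d : ℕ) : ℝ) + 1) = (k : ℝ) + 1 + d := by
          push_cast; ring
        rw [e1, e2, inv_mul_cancel_left₀ hSpos.ne']
      have h3 : |∏ j, Real.Gamma (1 -
              Int.fract ((((k + d : ℕ) : ℝ) + 1) * ((c j : ℝ) / (d : ℝ)) + m j)) /
          Real.Gamma (1 - (((k + d : ℕ) : ℝ) + 1) * ((c j : ℝ) / (d : ℝ)) - m j)|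
          = P k * |∏ j, Real.Gamma (1 -
              Int.fract (((k : ℝ) + 1) * ((c j : ℝ) / (d : ℝ)) + m j)) /
          Real.Gamma (1 - ((k : ℝ) + 1) * ((c j : ℝ) / (d : ℝ)) - m j)| := by
        rw [Finset.abs_prod, Finset.abs_prod, ← Finset.prod_mul_distrib]
        refine Finset.prod_congr rfl fun j _ => ?_
        have e1 : (((k + d : ℕ) : ℝ) + 1) * ((c j : ℝ) / (d : ℝ)) + m j
            = (((k : ℝ) + 1) * ((c j : ℝ) / (d : ℝ)) + m j) + (c j : ℕ) := by
          push_cast; field_simp; ring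
        have e2 : 1 - (((k + d : ℕ) : ℝ) + 1) * ((c j : ℝ) / (d : ℝ)) - m j
            = 1 - ((k : ℝ) + 1) * ((c j : ℝ) / (d : ℝ)) - m j - c j := by
          push_cast; field_simp; ring
        rw [e1, e2, Int.fract_add_natCast, div_eq_mul_inv (Real.Gamma _) (Real.Gamma _),
          div_eq_mul_inv (Real.Gamma _) (Real.Gamma _),
          aux_inv (1 - ((k : ℝ) + 1) * ((c j : ℝ) / (d : ℝ)) - m j - c j) (c j),
          sub_add_cancel, abs_mul, abs_mul, abs_mul, Finset.abs_prod]
        have e3 : ∏ i ∈ Finset.range (c j),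
            |1 - ((k : ℝ) + 1) * ((c j : ℝ) / (d : ℝ)) - m j - c j + i|
            = ∏ i ∈ Finset.range (c j),
              |(c j / d : ℝ) * ((k : ℝ) + 1) + (m j + c j - 1 - i)| := by
          refine Finset.prod_congr rfl fun i _ => ?_
          rw [← abs_neg]
          congr 1; ring
        rw [e3]; ring
      beta_reduce
      rw [hτ, hB, hB, abs_mul, abs_mul, h3, div_eq_mul_inv ((-1 : ℝ) ^ (k + d + 1)), mul_inv, abs_mul, abs_mul, h1, h2,
        div_eq_mul_inv ((-1 : ℝ) ^ (k + 1)), mul_inv, abs_mul, abs_mul]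
      simp only [abs_pow, abs_neg, abs_one, one_pow, one_mul]
      rw [div_eq_mul_inv (P k), mul_inv]
      ring
    · have hpow : τ ^ r < (r : ℝ) ^ r * (d : ℝ) ^ d * ∏ j, ((c j : ℝ) ^ c j)⁻¹ := by
        have hX : 0 ≤ (r : ℝ) ^ (r : ℝ) * (d : ℝ) ^ (d : ℝ) * ∏ j, (c j : ℝ) ^ (-(c j : ℝ)) := by
          have : 0 ≤ ∏ j, (c j : ℝ) ^ (-(c j : ℝ)) :=
            Finset.prod_nonneg fun j _ => by positivity
          positivity
        have h := pow_lt_pow_left₀ hτR hτ0.le hr.ne'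
        rw [hR, one_div, Real.rpow_inv_natCast_pow hX hr.ne'] at h
        simpa only [Real.rpow_natCast, Real.rpow_neg (Nat.cast_nonneg _)] using h
      have hC : 0 < ∏ j, (c j : ℝ) ^ c j := Finset.prod_pos fun j _ => pow_pos (hcR j) _
      rw [Finset.prod_inv_distrib, ← div_eq_mul_inv, lt_div_iff₀ hC] at hpow
      have e : ∏ j, (c j / d : ℝ) ^ c j = (∏ j, (c j : ℝ) ^ c j) / ((d : ℝ) ^ d * (d : ℝ) ^ r) := by
        simp only [div_pow]
        rw [Finset.prod_div_distrib, Finset.prod_pow_eq_pow_sum, hrsum, pow_add]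
      rw [e, one_pow, mul_one, div_pow, ← mul_div_assoc, div_lt_one (by positivity),
        ← mul_div_assoc, div_lt_div_iff₀ (by positivity) (by positivity)]
      calc _ < (r : ℝ) ^ r * (d : ℝ) ^ d * (d : ℝ) ^ r :=
            mul_lt_mul_of_pos_right hpow (by positivity)
        _ = _ := by ring
    · have hlim := (((tendsto_finsetProd Finset.univ fun j _ =>
          tendsto_finsetProd (Finset.range (c j)) fun i _ =>
            aux_lim (c j / d : ℝ) (m j + c j - 1 - i) (by positivity)).div
          ((tendsto_finsetProd (Finset.range r) fun i _ =>
            aux_lim (r / d : ℝ) (1 + i) (by positivity)).mul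
          (tendsto_finsetProd (Finset.range d) fun i _ =>
            aux_lim (1 : ℝ) i (by positivity))) (by
              simp only [Finset.prod_const, Finset.card_range]; positivity)).const_mul (τ ^ r))
      simp only [Finset.prod_const, Finset.card_range] at hlim
      refine hlim.congr fun k => ?_
      congr 1
      have hk : (0 : ℝ) < (k : ℝ) + 1 := by positivity
      simp only [Pi.div_apply, Finset.prod_div_distrib, Finset.prod_const, Finset.card_range,
        Finset.prod_pow_eq_pow_sum, hrsum, hP, hQ, hS]
      rw [div_mul_div_comm, ← pow_add, add_comm r d, div_div_div_cancel_right₀ (by positivity)]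
  refine ⟨main, main.congr fun k => ?_⟩
  rw [abs_mul, abs_of_pos (Real.rpow_pos_of_pos hτ0 _)]
end
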